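/- For every partition P of [s], the coefficient c_{s,P} of h_0·Σ_{i=1}^{s} h_1^{n-1}···h_i^{n-2}···h_s^{n-1} in the Chow class [W_{s,P}] ∈ A^{s(n-1)}(P_s) equals binom(n,2)·(n-1)_{|P|-1}, where (a)_b denotes the falling factorial. In particular, the coefficient c̃_s of h_0·Σ_{i=1}^{s} h_1^{n-1}···h_i^{n-2}···h_s^{n-1} in [W̃_s] equals binom(n,2)·(n-1)_{s-1}. -/

import Mathlib

noncomputable section

/-! ## Zariski topology on complex affine space -/

/-- The Zariski topology on the affine space `ι → ℂ`: the basic open sets are the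
complements of hypersurfaces. -/
def zTop (ι : Type*) : TopologicalSpace (ι → ℂ) :=
  TopologicalSpace.generateFrom
    {U | ∃ p : MvPolynomial ι ℂ, U = {x | MvPolynomial.eval x p ≠ 0}}

/-- Zariski open subset of affine space. -/
def zOpen {ι : Type*} (U : Set (ι → ℂ)) : Prop := @IsOpen _ (zTop ι) U

/-- Zariski closed subset of affine space. -/
def zClosed {ι : Type*} (Z : Set (ι → ℂ)) : Prop := @IsClosed _ (zTop ι) Z

/-- Zariski density. -/
def zDense {ι : Type*} (S : Set (ι → ℂ)) : Prop := @Dense _ (zTop ι) S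

/-- Zariski closure. -/
def zClosure {ι : Type*} (S : Set (ι → ℂ)) : Set (ι → ℂ) := @closure _ (zTop ι) S

/-- Irreducibility in the Zariski topology. -/
def zIrred {ι : Type*} (S : Set (ι → ℂ)) : Prop := @IsIrreducible _ (zTop ι) S

/-- The dimension of a subset of affine space: the topological Krull dimension of the
subspace topology induced by the Zariski topology. -/
def zDim {ι : Type*} (S : Set (ι → ℂ)) : WithBot ℕ∞ :=
  @topologicalKrullDim S (TopologicalSpace.induced Subtype.val (zTop ι))

/-- The common zero set of a family of polynomials. -/
def vanishSet {ι : Type*} (S : Set (MvPolynomial ι ℂ)) : Set (ι → ℂ) :=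
  {x | ∀ p ∈ S, MvPolynomial.eval x p = 0}

/-- The ideal of all polynomials vanishing on a subset of affine space. -/
def vanishingIdealOf {ι : Type*} (X : Set (ι → ℂ)) : Ideal (MvPolynomial ι ℂ) where
  carrier := {p | ∀ x ∈ X, MvPolynomial.eval x p = 0}
  add_mem' := by
    intro a b ha hb x hx
    simp [ha x hx, hb x hx]
  zero_mem' := by
    intro x hx
    simp
  smul_mem' := by
    intro c p hp x hx
    simp [smul_eq_mul, hp x hx]

/-- A subset of `ι → ℂ` is a cone if it is stable under scalar multiplication. -/
def IsCone {ι : Type*} (X : Set (ι → ℂ)) : Prop :=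
  ∀ (c : ℂ) (v : ι → ℂ), v ∈ X → c • v ∈ X

/-- The affine-linear subspace cut out by `k` affine-linear equations whose coefficients are
recorded by `a` (the `none` coordinate records the constant term). -/
def affSlice {ι : Type*} [Fintype ι] {k : ℕ} (a : Fin k × Option ι → ℂ) : Set (ι → ℂ) :=
  {x | ∀ j : Fin k, a (j, none) + ∑ i : ι, a (j, some i) * x i = 0}

/-- `hasConeDegree C k δ` : the projective variety with affine cone `C ⊆ ℂ^ι` and projective
dimension `k` has degree `δ`, expressed by saying that a generic affine-linear slice of `C` of
codimension `k + 1` consists of exactly `δ` points. -/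
def hasConeDegree {ι : Type*} [Fintype ι] (C : Set (ι → ℂ)) (k δ : ℕ) : Prop :=
  ∃ U : Set (Fin (k + 1) × Option ι → ℂ), zOpen U ∧ zDense U ∧
    ∀ a ∈ U, (C ∩ affSlice a).ncard = δ

/-! ## Eigenvectors and the Kalman variety -/

/-- `v` is an eigenvector of the matrix `A`. -/
def IsEigenvector {n : ℕ} (A : Matrix (Fin n) (Fin n) ℂ) (v : Fin n → ℂ) : Prop :=
  v ≠ 0 ∧ ∃ lam : ℂ, A.mulVec v = lam • v

/-- The space of `n × n` complex matrices, presented as an affine space. -/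
abbrev MatSpace (n : ℕ) := Fin n × Fin n → ℂ

/-- The matrix corresponding to a point of `MatSpace n`. -/
def toMat {n : ℕ} (A : MatSpace n) : Matrix (Fin n) (Fin n) ℂ :=
  Matrix.of fun i j => A (i, j)

/-- The affine cone over the Kalman variety `𝒦(X)` of the projective variety whose affine
cone is `X`: all matrices having an eigenvector lying on `X`. -/
def kalmanCone {n : ℕ} (X : Set (Fin n → ℂ)) : Set (MatSpace n) :=
  {A | ∃ v ∈ X, IsEigenvector (toMat A) v}



/-! ## Symmetric powers of matrices and Kalman matrices -/

/-- Index set for the monomials of degree `d` in `n` variables. -/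
abbrev MonIdx (n d : ℕ) := Sym (Fin n) d

/-- The exponent vector of the monomial indexed by `σ`. -/
def monExp {n d : ℕ} (σ : MonIdx n d) : Fin n →₀ ℕ :=
  Multiset.toFinsupp (σ : Multiset (Fin n))

/-- The generic `n × n` matrix, whose entries are the variables of `ℂ[A]`. -/
def genMat (n : ℕ) : Matrix (Fin n) (Fin n) (MvPolynomial (Fin n × Fin n) ℂ) :=
  Matrix.of fun i j => MvPolynomial.X (i, j)

/-- The `d`-th symmetric power `ρ_d(A)` of a square matrix `A`, i.e. the matrix (in the basis of
monomials of degree `d`) of the induced action of `A` on forms of degree `d`: the entry at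
`(τ, σ)` is the coefficient of `x^σ` in `(A·x)^τ`. -/
def symPow {R : Type*} [CommRing R] {n : ℕ} (d : ℕ) (A : Matrix (Fin n) (Fin n) R) :
    Matrix (MonIdx n d) (MonIdx n d) R :=
  Matrix.of fun τ σ =>
    MvPolynomial.coeff (monExp σ)
      (∏ j : Fin n, (∑ k : Fin n, MvPolynomial.C (A j k) * MvPolynomial.X k) ^ (monExp τ j))

/-- The coefficient vector of a form of degree `d`. -/
def coeffVec {n : ℕ} (d : ℕ) (f : MvPolynomial (Fin n) ℂ) : MonIdx n d → ℂ :=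
  fun σ => MvPolynomial.coeff (monExp σ) f

/-- The form of degree `d` with coefficient vector `c`. -/
def polyOf {n d : ℕ} (c : MonIdx n d → ℂ) : MvPolynomial (Fin n) ℂ :=
  ∑ σ : MonIdx n d, MvPolynomial.monomial (monExp σ) (c σ)

/-- The rectangular Kalman matrix of order `d` associated with a `p × N` coefficient matrix `C`:
its rows are the rows of `C`, `C·ρ_d(A)`, ..., `C·ρ_d(A)^{t-1}` for the generic matrix `A`. -/
def kalmanMat {n d p : ℕ} (t : ℕ) (C : Matrix (Fin p) (MonIdx n d) ℂ) :
    Matrix (Fin t × Fin p) (MonIdx n d) (MvPolynomial (Fin n × Fin n) ℂ) :=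
  Matrix.of fun r τ =>
    ∑ κ : MonIdx n d, MvPolynomial.C (C r.2 κ) * ((symPow d (genMat n)) ^ (r.1 : ℕ)) κ τ

/-- The square Kalman matrix `K_d(f)` of a form `f` with coefficient vector `c`: the rows are
`C_f ρ_d(A)^i` for `i = 0, …, N - 1` (indexed by monomials through a fixed enumeration). -/
def kalmanSq {n : ℕ} (d : ℕ) (c : MonIdx n d → ℂ) :
    Matrix (MonIdx n d) (MonIdx n d) (MvPolynomial (Fin n × Fin n) ℂ) :=
  Matrix.of fun σ τ =>
    ∑ κ : MonIdx n d, MvPolynomial.C (c κ) *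
      ((symPow d (genMat n)) ^ ((Fintype.equivFin (MonIdx n d)) σ : ℕ)) κ τ

/-- The determinant of the square Kalman matrix of order `d`. -/
def kalmanDet {n : ℕ} (d : ℕ) (c : MonIdx n d → ℂ) : MvPolynomial (Fin n × Fin n) ℂ :=
  (kalmanSq d c).det

/-- The locus of matrices at which all maximal minors of a (rectangular) matrix of polynomials
in `ℂ[A]` vanish. -/
def maxMinorsZeroSet {n d : ℕ} {ridx : Type*}
    (M : Matrix ridx (MonIdx n d) (MvPolynomial (Fin n × Fin n) ℂ)) : Set (MatSpace n) :=
  {A | ∀ e : MonIdx n d → ridx, Function.Injective e →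
    MvPolynomial.eval A (Matrix.det (Matrix.of fun σ τ => M (e σ) τ)) = 0}



/-! ## Polarizations and μ-Kalman varieties -/

/-- Evaluation of the multihomogeneous polarization `f_μ` of `f` at a tuple of vectors
`v_1, …, v_s` (up to a nonzero rational normalization constant): the coefficient of `t^μ`
in `f(t_1 v_1 + ⋯ + t_s v_s)`. -/
def polarEval {n s : ℕ} (f : MvPolynomial (Fin n) ℂ) (μ : Fin s → ℕ)
    (v : Fin s → Fin n → ℂ) : ℂ :=
  MvPolynomial.coeff (Finsupp.equivFunOnFinite.symm μ)
    (MvPolynomial.eval₂ MvPolynomial.C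
      (fun k => ∑ i : Fin s, MvPolynomial.C (v i k) * MvPolynomial.X i) f)

/-- The affine cone over the `μ`-Kalman variety `𝒦_μ(f)`: the Zariski closure of the set of
matrices admitting linearly independent eigenvectors `v_1, …, v_s` with `f_μ(v_1, …, v_s) = 0`. -/
def muKalmanCone {n : ℕ} (f : MvPolynomial (Fin n) ℂ) {s : ℕ} (μ : Fin s → ℕ) :
    Set (MatSpace n) :=
  zClosure {A | ∃ v : Fin s → (Fin n → ℂ),
    (∀ i, IsEigenvector (toMat A) (v i)) ∧ LinearIndependent ℂ v ∧ polarEval f μ v = 0}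

/-- The parts of a partition of `d`, listed as a tuple. -/
def partTuple (d : ℕ) (μ : Nat.Partition d) : Fin (Multiset.card μ.parts) → ℕ :=
  fun i => μ.parts.toList.get (i.cast (Multiset.length_toList _).symm)

/-- The multiset of nonzero exponents of the monomial indexed by `σ`. -/
def expMultiset {n d : ℕ} (σ : Sym (Fin n) d) : Multiset ℕ :=
  Multiset.filter (fun e => e ≠ 0)
    (Multiset.map (fun i => Multiset.toFinsupp (σ : Multiset (Fin n)) i) Finset.univ.val)

/-! ## Tangent spaces, smooth points and singular loci -/

/-- The Zariski tangent space of `X ⊆ ℂ^ι` at `x`: the common kernel of the differentials at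
`x` of all polynomials vanishing on `X`. -/
def tangentSpace {ι : Type*} [Fintype ι] (X : Set (ι → ℂ)) (x : ι → ℂ) :
    Submodule ℂ (ι → ℂ) where
  carrier := {u | ∀ p : MvPolynomial ι ℂ, (∀ y ∈ X, MvPolynomial.eval y p = 0) →
      ∑ i : ι, u i * MvPolynomial.eval x (MvPolynomial.pderiv i p) = 0}
  add_mem' := by
    intro a b ha hb p hp
    have h1 := ha p hp
    have h2 := hb p hp
    simp only [Pi.add_apply, add_mul, Finset.sum_add_distrib, h1, h2, add_zero]
  zero_mem' := by
    intro p hp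
    simp
  smul_mem' := by
    intro c u hu p hp
    have h1 := hu p hp
    simp only [Pi.smul_apply, smul_eq_mul, mul_assoc, ← Finset.mul_sum, h1, mul_zero]

/-- The local dimension of `X` at `x`, in the Zariski topology. -/
def zLocalDim {ι : Type*} (X : Set (ι → ℂ)) (x : ι → ℂ) : WithBot ℕ∞ :=
  ⨅ (U : Set (ι → ℂ)) (_ : zOpen U) (_ : x ∈ U), zDim (X ∩ U)

/-- `x` is a smooth point of `X`: the Zariski tangent space has dimension equal to the local
dimension of `X` at `x`. -/
def smoothAt {ι : Type*} [Fintype ι] (X : Set (ι → ℂ)) (x : ι → ℂ) : Prop :=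
  ((Module.finrank ℂ (tangentSpace X x) : ℕ∞) : WithBot ℕ∞) = zLocalDim X x

/-- The affine cone over the singular locus of the projective variety whose affine cone is `X`:
the nonzero points of `X` that are not smooth points. -/
def projSingCone {ι : Type*} [Fintype ι] (X : Set (ι → ℂ)) : Set (ι → ℂ) :=
  {x | x ∈ X ∧ x ≠ 0 ∧ ¬ smoothAt X x}

/-- The affine cone over the (reduced) singular locus of the Kalman variety of the projective
variety with affine cone `X`. -/
def singKalmanCone {n : ℕ} (X : Set (Fin n → ℂ)) : Set (MatSpace n) :=
  zClosure (projSingCone (zClosure (kalmanCone X)))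



/-! ## The spaces `ℙ_s = ℙ^{n²-1} × (ℙ^{n-1})^s` (as multicones) -/

/-- Coordinates for the multicone over `ℙ^{n²-1} × (ℙ^{n-1})^{×s}`. -/
abbrev MIdx (n s : ℕ) := (Fin n × Fin n) ⊕ (Fin s × Fin n)

/-- The matrix component of a point of the multicone. -/
def matPart {n s : ℕ} (x : MIdx n s → ℂ) : MatSpace n := fun ij => x (Sum.inl ij)

/-- The `i`-th vector component of a point of the multicone. -/
def vecPart {n s : ℕ} (x : MIdx n s → ℂ) (i : Fin s) : Fin n → ℂ := fun k => x (Sum.inr (i, k))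

/-- A partition of `{1, …, s}` into `k` (indexed) nonempty pairwise disjoint blocks. -/
structure IdxPartition (s k : ℕ) where
  block : Fin k → Finset (Fin s)
  nonempty : ∀ i, (block i).Nonempty
  disj : ∀ i j, i ≠ j → Disjoint (block i) (block j)
  cover : ∀ p : Fin s, ∃ i, p ∈ block i

/-- The minimal representative of the `i`-th block. -/
def IdxPartition.rep {s k : ℕ} (P : IdxPartition s k) (i : Fin k) : Fin s :=
  (P.block i).min' (P.nonempty i)

/-- The finest partition, all of whose blocks are singletons. -/
def singletonPartition (s : ℕ) : IdxPartition s s where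
  block i := {i}
  nonempty i := ⟨i, by simp⟩
  disj i j h := Finset.disjoint_singleton.2 h
  cover p := ⟨p, by simp⟩

/-- A tuple of nonzero vectors is `P`-compatible: vectors within each block of `P` are
proportional, and representatives of the distinct blocks are linearly independent. -/
def PCompatible {n s k : ℕ} (P : IdxPartition s k) (v : Fin s → Fin n → ℂ) : Prop :=
  (∀ p, v p ≠ 0) ∧
  (∀ i, ∀ p ∈ P.block i, ∀ q ∈ P.block i, ∃ c : ℂ, v p = c • v q) ∧
  (∀ r : Fin k → Fin s, (∀ i, r i ∈ P.block i) → LinearIndependent ℂ (fun i => v (r i)))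

/-- The multicone over `W_s`: tuples `(A, v_1, …, v_s)` where each `v_i` is an eigenvector of
the (nonzero) matrix `A`. -/
def Wcone (n s : ℕ) : Set (MIdx n s → ℂ) :=
  {x | matPart x ≠ 0 ∧ ∀ i, IsEigenvector (toMat (matPart x)) (vecPart x i)}

/-- The multicone over `W_{s,P}`: the Zariski closure of the set of tuples in `W_s` whose
vector part is `P`-compatible. -/
def WsPcone (n : ℕ) {s k : ℕ} (P : IdxPartition s k) : Set (MIdx n s → ℂ) :=
  zClosure {x | x ∈ Wcone n s ∧ PCompatible P (fun i => vecPart x i)}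

/-! ## Multidegrees -/

/-- Parameter space for a multiprojective slice of multidegree type `γ`. -/
abbrev MSliceParam (n s : ℕ) (γ : Fin (s + 1) → ℕ) : Type :=
  (Fin (n ^ 2 - γ 0) × Option (Fin n × Fin n)) ⊕ ((Σ j : Fin s, Fin (n - γ j.succ)) × Option (Fin n))

/-- The multiprojective affine-linear slice with parameters `a`: it cuts the matrix factor by
`n² - γ 0` affine-linear equations and the `j`-th vector factor by `n - γ (j+1)` affine-linear
equations. -/
def mSlice {n s : ℕ} (γ : Fin (s + 1) → ℕ) (a : MSliceParam n s γ → ℂ) :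
    Set (MIdx n s → ℂ) :=
  {x | (∀ r : Fin (n ^ 2 - γ 0),
          a (Sum.inl (r, none)) +
            ∑ ij : Fin n × Fin n, a (Sum.inl (r, some ij)) * x (Sum.inl ij) = 0) ∧
       (∀ j : Fin s, ∀ r : Fin (n - γ j.succ),
          a (Sum.inr (⟨j, r⟩, none)) +
            ∑ k : Fin n, a (Sum.inr (⟨j, r⟩, some k)) * x (Sum.inr (j, k)) = 0)}

/-- `hasMD W γ δ` : the coefficient of the monomial `h_0^{γ 0} h_1^{γ 1} ⋯ h_s^{γ s}` in the
Chow class of the multiprojective variety with multicone `W ⊆ ℂ^{n²} × (ℂ^n)^s` equals `δ`: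
a generic multiprojective slice of type `γ` meets `W` in exactly `δ` points. -/
def hasMD {n s : ℕ} (W : Set (MIdx n s → ℂ)) (γ : Fin (s + 1) → ℕ) (δ : ℕ) : Prop :=
  ∃ U : Set (MSliceParam n s γ → ℂ), zOpen U ∧ zDense U ∧
    ∀ a ∈ U, (W ∩ mSlice γ a).ncard = δ

/-- The exponent vector of the monomial `h_0 · h_1^{n-1} ⋯ h_i^{n-2} ⋯ h_s^{n-1}`. -/
def specialExp (n s : ℕ) (i : Fin s) : Fin (s + 1) → ℕ :=
  fun j => if j = 0 then 1 else if j = i.succ then n - 2 else n - 1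

/-- `γ` lies in the box of admissible exponents of the Chow ring of `ℙ^{n²-1} × (ℙ^{n-1})^s`. -/
def inBox (n s : ℕ) (γ : Fin (s + 1) → ℕ) : Prop :=
  γ 0 < n ^ 2 ∧ ∀ j : Fin s, γ j.succ < n

/-- `representsClass W c q` : the polynomial `q` represents the Chow class of the
multiprojective variety with multicone `W`, of codimension `c`: its coefficients in the
admissible box in degree `c` are the multidegrees of `W`, and all other coefficients vanish. -/
def representsClass {n s : ℕ} (W : Set (MIdx n s → ℂ)) (c : ℕ)
    (q : MvPolynomial (Fin (s + 1)) ℤ) : Prop :=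
  (∀ γ : Fin (s + 1) → ℕ, inBox n s γ → (∑ j, γ j) = c →
      ∃ δ : ℕ, q.coeff (Finsupp.equivFunOnFinite.symm γ) = (δ : ℤ) ∧ hasMD W γ δ) ∧
  (∀ γ : Fin (s + 1) → ℕ, ¬ (inBox n s γ ∧ (∑ j, γ j) = c) →
      q.coeff (Finsupp.equivFunOnFinite.symm γ) = 0)

/-! ## The Chow ring of `ℙ^{n²-1} × (ℙ^{n-1})^s` -/

/-- The defining ideal of the Chow ring `ℤ[h_0, …, h_s]/(h_0^{n²}, h_1^n, …, h_s^n)`. -/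
def chowIdeal (n s : ℕ) : Ideal (MvPolynomial (Fin (s + 1)) ℤ) :=
  Ideal.span ({MvPolynomial.X 0 ^ n ^ 2} ∪
    Set.range fun j : Fin s => MvPolynomial.X j.succ ^ n)

/-- The Chow ring `A^*(ℙ_s) = ℤ[h_0, …, h_s]/(h_0^{n²}, h_1^n, …, h_s^n)`. -/
abbrev ChowRing (n s : ℕ) := MvPolynomial (Fin (s + 1)) ℤ ⧸ chowIdeal n s

/-- The variable substitution `h_0 ↦ t_0`, `h_i ↦ t_{q_i}` underlying `φ_P`. -/
def blockVarMap {s k : ℕ} (P : IdxPartition s k) : Fin (k + 1) → Fin (s + 1) :=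
  Fin.cases 0 fun i => (P.rep i).succ

lemma phiP_aux {n s k : ℕ} (P : IdxPartition s k) :
    ∀ a ∈ chowIdeal n k,
      ((Ideal.Quotient.mk (chowIdeal n s)).comp
        (MvPolynomial.rename (R := ℤ) (blockVarMap P)).toRingHom) a = 0 := by
  intro a ha
  rw [RingHom.comp_apply, Ideal.Quotient.eq_zero_iff_mem]
  have hmap : (MvPolynomial.rename (R := ℤ) (blockVarMap P)).toRingHom a ∈
      Ideal.map (MvPolynomial.rename (R := ℤ) (blockVarMap P)).toRingHom
        (chowIdeal n k) :=
    Ideal.mem_map_of_mem _ ha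
  have hle : Ideal.map
      (MvPolynomial.rename (R := ℤ) (blockVarMap P)).toRingHom
      (chowIdeal n k) ≤ chowIdeal n s := by
    rw [chowIdeal, Ideal.map_span, Ideal.span_le]
    rintro q ⟨p, hp, rfl⟩
    rcases hp with hp | ⟨j, rfl⟩
    · rw [Set.mem_singleton_iff] at hp
      subst hp
      simp only [AlgHom.toRingHom_eq_coe, RingHom.coe_coe, map_pow, MvPolynomial.rename_X,
        Fin.cases_zero]
      exact Ideal.subset_span (Or.inl rfl)
    · simp only [AlgHom.toRingHom_eq_coe, RingHom.coe_coe, map_pow, MvPolynomial.rename_X,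
        Fin.cases_succ]
      exact Ideal.subset_span (Or.inr ⟨P.rep j, rfl⟩)
  exact hle hmap

/-- The ring map `φ_P : A^*(ℙ_k) → A^*(ℙ_s)` sending `h_0 ↦ t_0` and `h_i ↦ t_{q_i}`. -/
def phiP (n : ℕ) {s k : ℕ} (P : IdxPartition s k) : ChowRing n k →+* ChowRing n s :=
  Ideal.Quotient.lift (chowIdeal n k)
    ((Ideal.Quotient.mk (chowIdeal n s)).comp
      (MvPolynomial.rename (R := ℤ) (blockVarMap P)).toRingHom)
    (phiP_aux P)



/-! ## Discriminants of characteristic polynomials -/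

/-- `∏_{i<j} (l i - l j)^2` for a list `l`. -/
def listPairProdSq (l : List ℂ) : ℂ :=
  ∏ p ∈ Finset.univ.filter (fun p : Fin l.length × Fin l.length => p.1 < p.2),
    (l.get p.1 - l.get p.2) ^ 2

/-- The product of the squared differences of all pairs of elements of a multiset; applied to
the multiset of roots of a characteristic polynomial this is the discriminant. -/
def pairProdSq (m : Multiset ℂ) : ℂ := listPairProdSq m.toList

/-- The coordinate vector (for the action of the symmetric power `ρ_d`) of the symmetric
product `v_1 ⋯ v_d` of the vectors `v i`: its `σ`-th coordinate is the coefficient of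
`t_1 ⋯ t_d` in `∏_k (∑_i t_i v i k)^{σ_k}`. -/
def symProdVec {n d : ℕ} (v : Fin d → Fin n → ℂ) : MonIdx n d → ℂ := fun σ =>
  MvPolynomial.coeff (Finsupp.equivFunOnFinite.symm fun _ : Fin d => 1)
    (∏ k : Fin n, (∑ i : Fin d, MvPolynomial.C (v i k) * MvPolynomial.X i) ^ (monExp σ k))

/-
A generic slice of the given type cuts the matrix component of `W_{s,P}` to an affine pencil
`B₀ + t B₁`, normalises each `v_j` by an affine-linear equation, and puts `v_i` on a hyperplane
`e^⊥`. The matrices `A` of the pencil with an eigenvector on `e^⊥` are those for which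
`e, eA, …, eA^{n-1}` are linearly dependent, i.e. those at the roots `t` of a Krylov determinant of
degree `0 + 1 + ⋯ + (n-1) = C(n,2)`. Generically these roots are simple, which forces exactly one
eigenline to lie on `e^⊥`, and the spectrum of each root matrix is simple. The points of the slice
above a root then correspond to the injections of the `k` blocks of `P` into the `n` eigenlines that
send the block of `i` to the eigenline on `e^⊥`, and there are `(n-1)_{k-1}` of them. The genericity
conditions are nonvanishing of resultants, checked on two explicit pencils.
-/

open Polynomial Matrix

section Krylov

variable {R S : Type*} [CommRing R] [CommRing S] {n : ℕ}

/-- The Krylov matrix with rows `e, eA, …, eAⁿ⁻¹`, i.e. the Kalman matrix of order one of the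
linear form `e`. Its determinant vanishes when `A` has an eigenvector on the hyperplane `e = 0`. -/
def krylovMatrix (e : Fin n → R) (A : Matrix (Fin n) (Fin n) R) : Matrix (Fin n) (Fin n) R :=
  Matrix.of fun r => e ᵥ* A ^ (r : ℕ)

lemma map_krylovMatrix (φ : R →+* S) (e : Fin n → R) (A : Matrix (Fin n) (Fin n) R) :
    (krylovMatrix e A).map φ = krylovMatrix (φ ∘ e) (A.map φ) := by
  ext r c
  have hpow : (A.map φ) ^ (r : ℕ) = (A ^ (r : ℕ)).map φ := (map_pow φ.mapMatrix A r).symm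
  simp [krylovMatrix, hpow, RingHom.map_vecMul]

lemma map_det_krylovMatrix (φ : R →+* S) (e : Fin n → R) (A : Matrix (Fin n) (Fin n) R) :
    φ (krylovMatrix e A).det = (krylovMatrix (φ ∘ e) (A.map φ)).det := by
  rw [← map_krylovMatrix, RingHom.map_det, RingHom.mapMatrix_apply]

lemma pow_mulVec_of_mulVec_eq_smul {ι : Type*} [Fintype ι] [DecidableEq ι] {A : Matrix ι ι R}
    {v : ι → R} {l : R} (h : A *ᵥ v = l • v) (r : ℕ) : (A ^ r) *ᵥ v = l ^ r • v := by
  induction r with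
  | zero => simp
  | succ r ih =>
    rw [pow_succ, ← mulVec_mulVec, h, mulVec_smul, ih, smul_smul, pow_succ']

lemma krylovMatrix_mulVec {A : Matrix (Fin n) (Fin n) R} (e : Fin n → R) {v : Fin n → R} {l : R}
    (h : A *ᵥ v = l • v) (r : Fin n) :
    (krylovMatrix e A *ᵥ v) r = l ^ (r : ℕ) * (e ⬝ᵥ v) := by
  change (e ᵥ* A ^ (r : ℕ)) ⬝ᵥ v = _
  rw [← dotProduct_mulVec, pow_mulVec_of_mulVec_eq_smul h, dotProduct_smul, smul_eq_mul]

lemma dotProduct_ne_zero_of_det_krylovMatrix_ne_zero [IsDomain R] {A : Matrix (Fin n) (Fin n) R}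
    {e v : Fin n → R} {l : R} (hdet : (krylovMatrix e A).det ≠ 0) (hv : v ≠ 0)
    (h : A *ᵥ v = l • v) : e ⬝ᵥ v ≠ 0 := fun he =>
  hdet <| exists_mulVec_eq_zero_iff.1
    ⟨v, hv, funext fun r => by rw [krylovMatrix_mulVec e h, he, mul_zero, Pi.zero_apply]⟩

lemma det_krylovMatrix_mul_det {A V : Matrix (Fin n) (Fin n) R} (e : Fin n → R) {l : Fin n → R}
    (h : ∀ m, A *ᵥ V.col m = l m • V.col m) :
    (krylovMatrix e A).det * V.det = (vandermonde l).det * ∏ m, (e ⬝ᵥ V.col m) := by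
  have hmul : krylovMatrix e A * V = (vandermonde l)ᵀ * diagonal fun m => e ⬝ᵥ V.col m := by
    ext r m
    rw [mul_diagonal, transpose_apply, vandermonde_apply]
    exact krylovMatrix_mulVec e (h m) r
  rw [← det_mul, hmul, det_mul, det_transpose, det_diagonal]

lemma det_krylovMatrix_diagonal (e d : Fin n → R) :
    (krylovMatrix e (diagonal d)).det = (vandermonde d).det * ∏ m, e m := by
  have h := det_krylovMatrix_mul_det (A := diagonal d) (V := 1) e (l := d) fun m => by
    ext r
    obtain rfl | hr := eq_or_ne r m
    · simp [mulVec_diagonal]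
    · simp [mulVec_diagonal, hr]
  simpa [col, dotProduct, one_apply] using h

end Krylov

section SimpleSpectrum

variable {K : Type*} [Field K] {n : ℕ}

/-- A basis of `Kⁿ` consisting of eigenvectors of `A` with pairwise distinct eigenvalues. -/
structure SimpleEigenbasis (A : Matrix (Fin n) (Fin n) K) where
  basis : Module.Basis (Fin n) K (Fin n → K)
  eigenvalue : Fin n → K
  injective : Function.Injective eigenvalue
  mulVec_basis : ∀ m, A *ᵥ basis m = eigenvalue m • basis m

lemma nonempty_simpleEigenbasis [IsAlgClosed K] {A : Matrix (Fin n) (Fin n) K}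
    (hA : A.charpoly.Separable) : Nonempty (SimpleEigenbasis A) := by
  classical
  have hcard : A.charpoly.roots.toFinset.card = n := by
    rw [Multiset.toFinset_card_of_nodup (nodup_roots hA),
      ← (IsAlgClosed.splits A.charpoly).natDegree_eq_card_roots, A.charpoly_natDegree_eq_dim,
      Fintype.card_fin]
  let l : Fin n → K := fun m => (Finset.equivFinOfCardEq hcard).symm m
  have hl : Function.Injective l :=
    Subtype.val_injective.comp (Finset.equivFinOfCardEq hcard).symm.injective
  have hroot (m : Fin n) : Module.End.HasEigenvalue (toLin' A) (l m) := by
    rw [Module.End.hasEigenvalue_iff_isRoot_charpoly, charpoly_toLin']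
    exact isRoot_of_mem_roots (Multiset.mem_toFinset.1 (Subtype.prop _))
  choose v hv using fun m => (hroot m).exists_hasEigenvector
  let b := basisOfLinearIndependentOfCardEqFinrank' v
    (Module.End.eigenvectors_linearIndependent' (toLin' A) l hl v hv) (by simp)
  refine ⟨b, l, hl, fun m => ?_⟩
  rw [coe_basisOfLinearIndependentOfCardEqFinrank']
  exact (hv m).apply_eq_smul

namespace SimpleEigenbasis

variable {A : Matrix (Fin n) (Fin n) K} (b : SimpleEigenbasis A)

lemma exists_eq_smul {v : Fin n → K} (hv : v ≠ 0) {μ : K} (hAv : A *ᵥ v = μ • v) :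
    ∃ m, μ = b.eigenvalue m ∧ ∃ c : K, c ≠ 0 ∧ v = c • b.basis m := by
  have hcoord (m : Fin n) : b.eigenvalue m * b.basis.repr v m = μ * b.basis.repr v m := by
    have hlin : (b.basis.coord m) ∘ₗ (toLin' A) = b.eigenvalue m • b.basis.coord m := by
      refine b.basis.ext fun j => ?_
      obtain rfl | hj := eq_or_ne j m <;> simp [b.mulVec_basis, *]
    simpa [hAv] using (LinearMap.congr_fun hlin v).symm
  have hrepr : b.basis.repr v ≠ 0 := by simpa using hv
  obtain ⟨m, hm⟩ := Finsupp.ne_iff.1 hrepr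
  have heig {j : Fin n} (hj : b.basis.repr v j ≠ 0) : b.eigenvalue j = μ :=
    mul_right_cancel₀ hj (hcoord j)
  refine ⟨m, (heig hm).symm, _, hm, ?_⟩
  refine (b.basis.sum_repr v).symm.trans (Finset.sum_eq_single m (fun j _ hjm => ?_) (by simp))
  by_cases hj : b.basis.repr v j = 0
  · rw [hj, zero_smul]
  · exact absurd (b.injective ((heig hj).trans (heig hm).symm)) hjm

lemma mulVec_smul_basis (c : K) (m : Fin n) :
    A *ᵥ (c • b.basis m) = b.eigenvalue m • c • b.basis m := by
  rw [mulVec_smul, b.mulVec_basis, smul_comm]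

include b in
lemma separable_charpoly : A.charpoly.Separable := by
  have hdiag : LinearMap.toMatrix b.basis b.basis (toLin' A) = diagonal b.eigenvalue := by
    ext i j
    rw [LinearMap.toMatrix_apply, toLin'_apply, b.mulVec_basis, map_smul, Module.Basis.repr_self]
    obtain rfl | hij := eq_or_ne i j <;> simp [*]
  rw [← charpoly_toLin', ← LinearMap.charpoly_toMatrix _ b.basis, hdiag, charpoly_diagonal]
  exact separable_prod_X_sub_C_iff.2 b.injective

/-- The same basis, as an eigenbasis of a nonzero multiple of the matrix. -/
def smul {c : K} (hc : c ≠ 0) : SimpleEigenbasis (c • A) where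
  basis := b.basis
  eigenvalue m := c * b.eigenvalue m
  injective := (mul_right_injective₀ hc).comp b.injective
  mulVec_basis m := by rw [smul_mulVec, b.mulVec_basis, smul_smul]

lemma det_krylovMatrix_eq_zero_iff (e : Fin n → K) :
    (krylovMatrix e A).det = 0 ↔ ∃ m, e ⬝ᵥ b.basis m = 0 := by
  refine ⟨fun hdet => ?_, fun ⟨m, hm⟩ => ?_⟩
  · have h := det_krylovMatrix_mul_det (V := (Matrix.of b.basis)ᵀ) e b.mulVec_basis
    rw [hdet, zero_mul, eq_comm, mul_eq_zero, Finset.prod_eq_zero_iff] at h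
    obtain ⟨m, -, hm⟩ := h.resolve_left (det_vandermonde_ne_zero_iff.2 b.injective)
    exact ⟨m, hm⟩
  · by_contra hdet
    exact dotProduct_ne_zero_of_det_krylovMatrix_ne_zero hdet (b.basis.ne_zero m)
      (b.mulVec_basis m) hm

end SimpleEigenbasis

end SimpleSpectrum

section Adjugate

variable {ι R K : Type*} [Fintype ι] [DecidableEq ι] [CommRing R] [Field K]

lemma adjugate_mulVec_eigenvector {A : Matrix ι ι R} {w : ι → R} {μ : R} {q : R[X]}
    (hq : A.charpoly = (X - C μ) * q) (hw : A *ᵥ w = μ • w) (l : R) :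
    (scalar ι l - A).adjugate *ᵥ w = q.eval l • w := by
  have hchar : charmatrix A *ᵥ (C ∘ w) = (X - C μ) • (C ∘ w) := by
    have hmap : A.map C *ᵥ (C ∘ w) = C μ • (C ∘ w) := by
      ext1 i
      rw [← RingHom.map_mulVec, hw]
      simp
    rw [charmatrix, sub_mulVec, RingHom.mapMatrix_apply, hmap, sub_smul]
    simp [← smul_one_eq_diagonal, smul_mulVec]
  have hadj : (charmatrix A).adjugate *ᵥ (C ∘ w) = q • (C ∘ w) := by
    have h : (X - C μ) • ((charmatrix A).adjugate *ᵥ (C ∘ w)) = (X - C μ) • (q • (C ∘ w)) := by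
      rw [← mulVec_smul, ← hchar, mulVec_mulVec, adjugate_mul, ← charpoly, smul_mulVec, one_mulVec,
        hq, mul_smul]
    ext1 i
    exact (monic_X_sub_C μ).isRegular.left (congrFun h i)
  have heval : ((charmatrix A).adjugate).map (evalRingHom l) = (scalar ι l - A).adjugate := by
    rw [← RingHom.mapMatrix_apply, RingHom.map_adjugate]
    congr 1
    ext i j
    simp [charmatrix, diagonal_apply, apply_ite (eval l)]
  rw [← heval]
  ext1 i
  simpa [RingHom.map_mulVec, Function.comp_def] using congrArg (evalRingHom l) (congrFun hadj i)

lemma isRoot_charpoly_of_mulVec_eq_smul {A : Matrix ι ι K} {w : ι → K} (hw0 : w ≠ 0) {l : K}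
    (hw : A *ᵥ w = l • w) : A.charpoly.IsRoot l := by
  rw [← charpoly_toLin', ← Module.End.hasEigenvalue_iff_isRoot_charpoly]
  exact Module.End.hasEigenvalue_of_hasEigenvector
    ⟨Module.End.mem_eigenspace_iff.2 (by rwa [toLin'_apply]), hw0⟩

lemma adjugate_mulVec_eigenvector_ne_zero {A : Matrix ι ι K} (hA : A.charpoly.Separable)
    {w : ι → K} (hw0 : w ≠ 0) {l : K} (hw : A *ᵥ w = l • w) :
    (scalar ι l - A).adjugate *ᵥ w ≠ 0 := by
  obtain ⟨q, hq⟩ := dvd_iff_isRoot.2 (isRoot_charpoly_of_mulVec_eq_smul hw0 hw)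
  rw [adjugate_mulVec_eigenvector hq hw]
  refine smul_ne_zero (fun hql => ?_) hw0
  refine not_isUnit_X_sub_C l (hA.squarefree _ ?_)
  rw [hq]
  exact mul_dvd_mul_left _ (dvd_iff_isRoot.2 hql)

lemma two_le_rootMultiplicity_charpoly {A : Matrix ι ι K} {v w : ι → K} {l : K}
    (hli : LinearIndependent K ![v, w]) (hv : A *ᵥ v = l • v) (hw : A *ᵥ w = l • w) :
    2 ≤ A.charpoly.rootMultiplicity l := by
  have hmem : ∀ i, ![v, w] i ∈ Module.End.eigenspace (toLin' A) l := by
    simp [Fin.forall_fin_two, hv, hw]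
  have hspan := Submodule.finrank_mono
    (Submodule.span_le.2 (Set.range_subset_iff.2 hmem) : Submodule.span K (Set.range ![v, w]) ≤ _)
  rw [finrank_span_eq_card hli, Fintype.card_fin] at hspan
  rw [← charpoly_toLin']
  exact hspan.trans ((toLin' A).finrank_genEigenspace_le l 1)

lemma adjugate_mulVec_eq_zero_of_linearIndependent {A : Matrix ι ι K} {v w : ι → K} {l μ : K}
    (hli : LinearIndependent K ![v, w]) (hv : A *ᵥ v = l • v) (hw : A *ᵥ w = μ • w) :
    (scalar ι l - A).adjugate *ᵥ w = 0 := by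
  obtain ⟨q, hq⟩ := dvd_iff_isRoot.2 (isRoot_charpoly_of_mulVec_eq_smul (hli.ne_zero 1) hw)
  suffices q.eval l = 0 by
    rw [adjugate_mulVec_eigenvector (w := w) hq hw, this, zero_smul]
  obtain rfl | hne := eq_or_ne l μ
  · have hsq : (X - C l) * (X - C l) ∣ (X - C l) * q := by
      rw [← sq, ← hq, ← le_rootMultiplicity_iff A.charpoly_monic.ne_zero]
      exact two_le_rootMultiplicity_charpoly hli hv hw
    exact dvd_iff_isRoot.1 ((mul_dvd_mul_iff_left (X_sub_C_ne_zero l)).1 hsq)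
  · have hroot := isRoot_charpoly_of_mulVec_eq_smul (hli.ne_zero 0) hv
    simpa [hq, sub_ne_zero.2 hne] using hroot

end Adjugate

section Resultant

variable {σ K : Type*} [Field K]

lemma isCoprime_of_resultant_ne_zero {f g : K[X]} {m d : ℕ} (hf : f.natDegree ≤ m)
    (hg : g.natDegree ≤ d) (hm : m ≠ 0) (h : resultant f g m d ≠ 0) : IsCoprime f g := by
  obtain ⟨p, q, -, -, hpq⟩ := exists_mul_add_mul_eq_C_resultant f g hf hg (Or.inl hm)
  refine ⟨C (resultant f g m d)⁻¹ * p, C (resultant f g m d)⁻¹ * q, ?_⟩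
  rw [mul_assoc, mul_assoc, ← mul_add, mul_comm p, mul_comm q, hpq, ← C_mul, inv_mul_cancel₀ h, C_1]

lemma resultant_ne_zero_of_isCoprime {f g : K[X]} {d : ℕ} (hf : f ≠ 0) (hg : g.natDegree ≤ d)
    (h : IsCoprime f g) : resultant f g f.natDegree d ≠ 0 := by
  obtain ⟨k, rfl⟩ := Nat.exists_eq_add_of_le hg
  rw [resultant_add_right_deg _ _ _ _ _ le_rfl]
  exact mul_ne_zero (pow_ne_zero _ (leadingCoeff_ne_zero.2 hf)) (resultant_ne_zero _ _ h)

lemma exists_forall_eval_ne_zero_isCoprime {F H : (MvPolynomial σ K)[X]} {N : ℕ} (hN : N ≠ 0)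
    (hF : F.natDegree ≤ N) (a₀ : σ → K) (hdeg : (F.map (MvPolynomial.eval a₀)).natDegree = N)
    (hcop : IsCoprime (F.map (MvPolynomial.eval a₀)) (H.map (MvPolynomial.eval a₀))) :
    ∃ G : MvPolynomial σ K, G ≠ 0 ∧ ∀ a, MvPolynomial.eval a G ≠ 0 →
      (F.map (MvPolynomial.eval a)).natDegree = N ∧
        IsCoprime (F.map (MvPolynomial.eval a)) (H.map (MvPolynomial.eval a)) := by
  have heval (a : σ → K) : MvPolynomial.eval a (F.coeff N * resultant F H N H.natDegree) =
      (F.map (MvPolynomial.eval a)).coeff N *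
        resultant (F.map (MvPolynomial.eval a)) (H.map (MvPolynomial.eval a)) N H.natDegree := by
    rw [map_mul, coeff_map, resultant_map_map]
  refine ⟨F.coeff N * resultant F H N H.natDegree, fun h0 => ?_, fun a ha => ?_⟩
  · have hFa : F.map (MvPolynomial.eval a₀) ≠ 0 := by
      rintro h
      exact hN (by rw [← hdeg, h, natDegree_zero])
    refine mul_ne_zero ?_ ?_ ((heval a₀).symm.trans (by rw [h0, map_zero]))
    · rw [← hdeg]
      exact leadingCoeff_ne_zero.2 hFa
    · rw [← hdeg]
      exact resultant_ne_zero_of_isCoprime hFa natDegree_map_le hcop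
  · rw [heval] at ha
    have hle : (F.map (MvPolynomial.eval a)).natDegree ≤ N := natDegree_map_le.trans hF
    exact ⟨natDegree_eq_of_le_of_coeff_ne_zero hle (left_ne_zero_of_mul ha),
      isCoprime_of_resultant_ne_zero hle natDegree_map_le hN (right_ne_zero_of_mul ha)⟩

end Resultant

section Pencil

variable {R S : Type*} [CommRing R] [CommRing S] {n : ℕ}

/-- The pencil `B₀ + X B₁`, a matrix of polynomials in the pencil parameter `X`. -/
def pencil (B₀ B₁ : Matrix (Fin n) (Fin n) R) : Matrix (Fin n) (Fin n) R[X] :=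
  B₀.map C + (X : R[X]) • B₁.map C

/-- The Krylov determinant of `B₀ + t B₁` as a polynomial in `t`. Its roots are the parameters at
which the matrix of the pencil has an eigenvector on the hyperplane `e = 0`. -/
def krylovPoly (e : Fin n → R) (B₀ B₁ : Matrix (Fin n) (Fin n) R) : R[X] :=
  (krylovMatrix (C ∘ e) (pencil B₀ B₁)).det

/-- The discriminant of the characteristic polynomial of `B₀ + t B₁` as a polynomial in `t`. The
resultant is formed with the generic degrees so that it commutes with specialisation. -/
def pencilDiscr (B₀ B₁ : Matrix (Fin n) (Fin n) R) : R[X] :=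
  resultant (pencil B₀ B₁).charpoly (derivative (pencil B₀ B₁).charpoly) n (n - 1)

variable (φ : R →+* S) (e : Fin n → R) (B₀ B₁ : Matrix (Fin n) (Fin n) R)

lemma map_pencil :
    (pencil B₀ B₁).map (mapRingHom φ) = pencil (B₀.map φ) (B₁.map φ) := by
  ext1 i j
  simp [pencil]

lemma eval_pencil (t : R) : (pencil B₀ B₁).map (evalRingHom t) = B₀ + t • B₁ := by
  ext i j
  simp [pencil, mul_comm (B₁ i j)]

lemma map_krylovPoly :
    (krylovPoly e B₀ B₁).map φ = krylovPoly (φ ∘ e) (B₀.map φ) (B₁.map φ) := by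
  rw [krylovPoly, krylovPoly, ← coe_mapRingHom, map_det_krylovMatrix, map_pencil]
  congr 2
  ext1 i
  simp

lemma eval_krylovPoly (t : R) :
    (krylovPoly e B₀ B₁).eval t = (krylovMatrix e (B₀ + t • B₁)).det := by
  rw [krylovPoly, ← coe_evalRingHom, map_det_krylovMatrix, eval_pencil]
  congr 2
  ext1 i
  simp

lemma map_pencilDiscr : (pencilDiscr B₀ B₁).map φ = pencilDiscr (B₀.map φ) (B₁.map φ) := by
  rw [pencilDiscr, pencilDiscr, ← map_pencil, charpoly_map, derivative_map, resultant_map_map,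
    coe_mapRingHom]

lemma eval_pencilDiscr (t : R) : (pencilDiscr B₀ B₁).eval t =
    resultant (B₀ + t • B₁).charpoly (derivative (B₀ + t • B₁).charpoly) n (n - 1) := by
  rw [pencilDiscr, ← eval_pencil, charpoly_map, derivative_map, resultant_map_map, coe_evalRingHom]

lemma natDegree_pencil_pow_le (r : ℕ) (i j : Fin n) : ((pencil B₀ B₁ ^ r) i j).natDegree ≤ r := by
  induction r generalizing i j with
  | zero => rw [pow_zero, one_apply]; split_ifs <;> simp
  | succ r ih =>
    rw [pow_succ, mul_apply]
    refine natDegree_sum_le_of_forall_le _ _ fun k _ => natDegree_mul_le_of_le (ih _ _) ?_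
    simpa [pencil, add_comm] using natDegree_linear_le (a := B₁ k j) (b := B₀ k j)

lemma natDegree_krylovPoly_le : (krylovPoly e B₀ B₁).natDegree ≤ n.choose 2 := by
  have hentry (r c : Fin n) : (krylovMatrix (C ∘ e) (pencil B₀ B₁) r c).natDegree ≤ r := by
    simp only [krylovMatrix, of_apply, vecMul, dotProduct]
    exact natDegree_sum_le_of_forall_le _ _ fun k _ =>
      (natDegree_C_mul_le _ _).trans (natDegree_pencil_pow_le _ _ _ _ _)
  have hsum (τ : Equiv.Perm (Fin n)) : ∑ i, (τ i : ℕ) = n.choose 2 := by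
    rw [Equiv.sum_comp τ (fun i : Fin n => (i : ℕ)), Fin.sum_univ_eq_sum_range (fun i => i) n,
      Finset.sum_range_id, Nat.choose_two_right]
  rw [krylovPoly, det_apply]
  refine natDegree_sum_le_of_forall_le _ _ fun τ _ => (natDegree_smul_le _ _).trans ?_
  refine (natDegree_prod_le _ _).trans ?_
  rw [← hsum τ]
  exact Finset.sum_le_sum fun i _ => hentry (τ i) i

end Pencil

section DoubleRoot

lemma sq_dvd_det_of_dvd_col {ι R : Type*} [Fintype ι] [DecidableEq ι] [CommRing R]
    {M : Matrix ι ι R} {p : R} {i j : ι} (hij : i ≠ j) (hi : ∀ r, p ∣ M r i)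
    (hj : ∀ r, p ∣ M r j) : p ^ 2 ∣ M.det := by
  rw [det_apply]
  refine Finset.dvd_sum fun τ _ => dvd_smul_of_dvd _ ?_
  rw [← Finset.mul_prod_erase _ _ (Finset.mem_univ i),
    ← Finset.mul_prod_erase _ _ (Finset.mem_erase.2 ⟨hij.symm, Finset.mem_univ j⟩), ← mul_assoc, sq]
  exact dvd_mul_of_dvd_left (mul_dvd_mul (hi _) (hj _)) _

lemma X_sub_C_sq_dvd_krylovPoly {K : Type*} [Field K] {n : ℕ} {e : Fin n → K}
    {B₀ B₁ : Matrix (Fin n) (Fin n) K} {t : K} (b : SimpleEigenbasis (B₀ + t • B₁)) {i j : Fin n}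
    (hij : i ≠ j) (hi : e ⬝ᵥ b.basis i = 0) (hj : e ⬝ᵥ b.basis j = 0) :
    (X - C t) ^ 2 ∣ krylovPoly e B₀ B₁ := by
  let V : Matrix (Fin n) (Fin n) K := (Matrix.of b.basis)ᵀ
  have hV : IsUnit (V.map C).det := by
    have hdet : IsUnit V.det := by
      rw [det_transpose, ← isUnit_iff_isUnit_det, ← linearIndependent_rows_iff_isUnit]
      exact b.basis.linearIndependent
    simpa [RingHom.map_det] using hdet.map C
  have hcol (m : Fin n) (hm : e ⬝ᵥ b.basis m = 0) (r : Fin n) :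
      X - C t ∣ (krylovMatrix (C ∘ e) (pencil B₀ B₁) * V.map C) r m := by
    have hmap : ((krylovMatrix (C ∘ e) (pencil B₀ B₁)) * V.map C).map (evalRingHom t) =
        krylovMatrix e (B₀ + t • B₁) * V := by
      rw [Matrix.map_mul, map_krylovMatrix, eval_pencil]
      congr 1
      · congr 1; ext1 i; simp
      · ext i j; simp
    rw [dvd_iff_isRoot, IsRoot, ← coe_evalRingHom, ← map_apply (f := evalRingHom t), hmap]
    exact (krylovMatrix_mulVec e (b.mulVec_basis m) r).trans (by rw [hm, mul_zero])
  rw [krylovPoly, ← hV.dvd_mul_right, ← det_mul]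
  exact sq_dvd_det_of_dvd_col hij (hcol i hi) (hcol j hj)

end DoubleRoot

section ExplicitPencils

variable {R K : Type*} [CommRing R] [Field K] {n : ℕ}

lemma two_pow_add_two_pow_injective {i j i' j' : ℕ} (hij : i < j) (hij' : i' < j')
    (h : 2 ^ i + 2 ^ j = 2 ^ i' + 2 ^ j') : i = i' ∧ j = j' := by
  have hle {a b c d : ℕ} (hab : a < b) (hcd : c < d) (h : 2 ^ a + 2 ^ b = 2 ^ c + 2 ^ d) :
      d ≤ b := by
    by_contra! hlt
    have h₁ : 2 ^ a < 2 ^ b := Nat.pow_lt_pow_right one_lt_two hab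
    have h₂ : 2 ^ (b + 1) ≤ 2 ^ d := Nat.pow_le_pow_right two_pos hlt
    have h₃ : 0 < 2 ^ c := Nat.two_pow_pos c
    rw [pow_succ] at h₂
    omega
  obtain rfl : j = j' := le_antisymm (hle hij' hij h.symm) (hle hij hij' h)
  exact ⟨Nat.pow_right_injective le_rfl (Nat.add_right_cancel h), rfl⟩

lemma card_pairs_lt (n : ℕ) :
    ((Finset.univ : Finset (Fin n)).sigma Finset.Ioi).card = n.choose 2 := by
  simp only [Finset.card_sigma, Fin.card_Ioi]
  rw [Fin.sum_univ_eq_sum_range (fun i => n - 1 - i) n, Finset.sum_range_reflect (fun i => i) n,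
    Finset.sum_range_id, Nat.choose_two_right]

-- The diagonal entries `4ʲ - 1 + t 2ʲ` of index `i` and `j` collide exactly at `t = -(2ⁱ + 2ʲ)`.
lemma krylovPoly_diagonal_two_pow :
    krylovPoly (1 : Fin n → R) (diagonal fun j => (2 ^ (j : ℕ)) ^ 2 - 1)
        (diagonal fun j => 2 ^ (j : ℕ)) =
      C (∏ p ∈ (Finset.univ : Finset (Fin n)).sigma Finset.Ioi, (2 ^ (p.2 : ℕ) - 2 ^ (p.1 : ℕ))) *
        ∏ p ∈ (Finset.univ : Finset (Fin n)).sigma Finset.Ioi,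
          (X - C (-(2 ^ (p.1 : ℕ) + 2 ^ (p.2 : ℕ)))) := by
  have hpencil : pencil (diagonal fun j : Fin n => ((2 : R) ^ (j : ℕ)) ^ 2 - 1)
      (diagonal fun j => 2 ^ (j : ℕ)) =
        diagonal fun j : Fin n => C ((2 ^ (j : ℕ)) ^ 2 - 1) + X * C (2 ^ (j : ℕ)) := by
    ext1 i j
    obtain rfl | hij := eq_or_ne i j <;> simp [pencil, *]
  have hone : ∏ m, (C ∘ (1 : Fin n → R)) m = 1 := Finset.prod_eq_one fun _ _ => C_1
  rw [krylovPoly, hpencil, det_krylovMatrix_diagonal, hone, mul_one, det_vandermonde, map_prod,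
    ← Finset.prod_mul_distrib, Finset.prod_sigma]
  refine Finset.prod_congr rfl fun i _ => Finset.prod_congr rfl fun j _ => ?_
  simp only [map_sub, map_add, map_neg, map_pow, map_one]
  ring

lemma natDegree_and_separable_krylovPoly_diagonal_two_pow [CharZero K] :
    letI F := krylovPoly (1 : Fin n → K) (diagonal fun j => (2 ^ (j : ℕ)) ^ 2 - 1)
      (diagonal fun j => 2 ^ (j : ℕ))
    F.natDegree = n.choose 2 ∧ F.Separable := by
  have hlead : ∏ p ∈ (Finset.univ : Finset (Fin n)).sigma Finset.Ioi,
      ((2 : K) ^ (p.2 : ℕ) - 2 ^ (p.1 : ℕ)) ≠ 0 := by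
    refine Finset.prod_ne_zero_iff.2 fun p hp => sub_ne_zero.2 fun h => ?_
    have hlt : (p.1 : ℕ) < p.2 := by simpa using hp
    exact hlt.ne' (Nat.pow_right_injective le_rfl (by exact_mod_cast h))
  have hsep : (∏ p ∈ (Finset.univ : Finset (Fin n)).sigma Finset.Ioi,
      (X - C (-((2 : K) ^ (p.1 : ℕ) + 2 ^ (p.2 : ℕ))))).Separable := by
    rw [separable_prod_X_sub_C_iff']
    rintro ⟨i, j⟩ hij ⟨i', j'⟩ hij' h
    obtain ⟨hi, hj⟩ := two_pow_add_two_pow_injective (i := i) (j := j) (i' := i') (j' := j')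
      (by simpa using hij) (by simpa using hij') (by exact_mod_cast neg_injective h)
    obtain rfl := Fin.ext hi
    obtain rfl := Fin.ext hj
    rfl
  rw [krylovPoly_diagonal_two_pow]
  refine ⟨?_, hsep.unit_mul (isUnit_C.2 hlead.isUnit)⟩
  rw [natDegree_C_mul hlead, natDegree_prod_of_monic _ _ fun p _ => monic_X_sub_C _]
  simp only [natDegree_X_sub_C, Finset.sum_const, card_pairs_lt, smul_eq_mul, mul_one]

lemma pow_apply_zero_of_hessenberg [NeZero n] {A : Matrix (Fin n) (Fin n) R} {x : R}
    (hzero : ∀ i j : Fin n, (i : ℕ) + 1 < j → A i j = 0)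
    (hsuper : ∀ i j : Fin n, (j : ℕ) = i + 1 → A i j = x) (r : ℕ) (c : Fin n) :
    (r < (c : ℕ) → (A ^ r) 0 c = 0) ∧ ((c : ℕ) = r → (A ^ r) 0 c = x ^ r) := by
  induction r generalizing c with
  | zero =>
    refine ⟨fun hc => ?_, fun hc => ?_⟩
    · rw [pow_zero, one_apply_ne (by rintro rfl; simp at hc)]
    · obtain rfl : c = 0 := Fin.ext hc
      simp
  | succ r ih =>
    have hterm (k : Fin n) (hrc : r + 1 ≤ (c : ℕ)) (hk : (k : ℕ) ≠ r ∨ r + 1 < (c : ℕ)) :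
        (A ^ r) 0 k * A k c = 0 := by
      by_cases hrk : r < (k : ℕ)
      · rw [(ih k).1 hrk, zero_mul]
      · rw [hzero k c (by omega), mul_zero]
    rw [pow_succ, mul_apply]
    refine ⟨fun hc => Finset.sum_eq_zero fun k _ => hterm k hc.le (Or.inr hc), fun hc => ?_⟩
    rw [Finset.sum_eq_single (⟨r, by omega⟩ : Fin n), (ih _).2 rfl, hsuper _ _ hc, pow_succ]
    · exact fun k _ hk => hterm k hc.ge (Or.inl fun h => hk (Fin.ext h))
    · simp

lemma det_krylovMatrix_of_hessenberg [NeZero n] {A : Matrix (Fin n) (Fin n) R} {x : R}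
    (hzero : ∀ i j : Fin n, (i : ℕ) + 1 < j → A i j = 0)
    (hsuper : ∀ i j : Fin n, (j : ℕ) = i + 1 → A i j = x) :
    (krylovMatrix (Pi.single 0 1) A).det = x ^ n.choose 2 := by
  have hentry (r c : Fin n) : krylovMatrix (Pi.single 0 1) A r c = (A ^ (r : ℕ)) 0 c := by
    simp [krylovMatrix]
  have hpow := pow_apply_zero_of_hessenberg hzero hsuper
  rw [det_of_isLowerTriangular _ fun r c hrc =>
    (hentry r c).trans ((hpow r c).1 (by simpa using hrc))]
  simp only [hentry, (hpow _ _).2]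
  rw [Finset.prod_pow_eq_pow_sum, Fin.sum_univ_eq_sum_range (fun i => i) n, Finset.sum_range_id,
    Nat.choose_two_right]

/-- The matrix with ones at the `(0, 0)` entry and on the superdiagonal, the direction of the pencil
whose Krylov polynomial is a power of `X`. -/
def cornerShift (R : Type*) [CommRing R] (n : ℕ) [NeZero n] : Matrix (Fin n) (Fin n) R :=
  Matrix.of fun i j => if i = 0 ∧ j = 0 ∨ (j : ℕ) = i + 1 then 1 else 0

lemma krylovPoly_cornerShift [NeZero n] (d : Fin n → R) :
    krylovPoly (Pi.single 0 1) (diagonal d) (cornerShift R n) = X ^ n.choose 2 := by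
  have hsingle : C ∘ (Pi.single 0 1 : Fin n → R) = Pi.single 0 1 := by
    ext1 i
    simp [Pi.single_apply, apply_ite C]
  rw [krylovPoly, hsingle]
  refine det_krylovMatrix_of_hessenberg (fun i j hij => ?_) fun i j hij => ?_
  · have hne : i ≠ j := by rintro rfl; omega
    have hj : j ≠ 0 := by rintro rfl; simp at hij
    simp [pencil, cornerShift, hne, hj, hij.ne']
  · have hne : i ≠ j := by rintro rfl; omega
    simp [pencil, cornerShift, hne, hij]

end ExplicitPencils

section GenericPencil

variable {K : Type*} [Field K] {n : ℕ} {J : Type*}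

/-- The genericity conditions on a pencil `B₀ + t B₁` and on the linear forms `e` and `c j` under
which the matrices of the pencil with an eigenvector on `e = 0` are as many as possible, have simple
spectrum, and have no eigenvector on any of the hyperplanes `c j = 0`. -/
structure IsGenericPencil (e : Fin n → K) (B₀ B₁ : Matrix (Fin n) (Fin n) K)
    (c : J → Fin n → K) : Prop where
  natDegree_eq : (krylovPoly e B₀ B₁).natDegree = n.choose 2
  separable : (krylovPoly e B₀ B₁).Separable
  separable_charpoly : ∀ t, (krylovPoly e B₀ B₁).IsRoot t → (B₀ + t • B₁).charpoly.Separable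
  det_ne_zero : ∀ t, (krylovPoly e B₀ B₁).IsRoot t → ∀ j, (krylovMatrix (c j) (B₀ + t • B₁)).det ≠ 0

lemma isGenericPencil_of_isCoprime [Fintype J] (hn : n ≠ 0) {e : Fin n → K}
    {B₀ B₁ : Matrix (Fin n) (Fin n) K} {c : J → Fin n → K}
    (hdeg : (krylovPoly e B₀ B₁).natDegree = n.choose 2) (hsep : (krylovPoly e B₀ B₁).Separable)
    (hcop : IsCoprime (krylovPoly e B₀ B₁)
      (pencilDiscr B₀ B₁ * ∏ j, krylovPoly (c j) B₀ B₁)) :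
    IsGenericPencil e B₀ B₁ c := by
  have hne {t : K} (ht : (krylovPoly e B₀ B₁).IsRoot t) :
      (pencilDiscr B₀ B₁).eval t ≠ 0 ∧ ∀ j, (krylovPoly (c j) B₀ B₁).eval t ≠ 0 := by
    obtain ⟨p, q, hpq⟩ := hcop
    have heval := congrArg (eval t) hpq
    rw [eval_add, eval_mul, ht, mul_zero, zero_add, eval_mul, eval_mul, eval_prod,
      eval_one] at heval
    have h := right_ne_zero_of_mul (heval.trans_ne one_ne_zero)
    exact ⟨left_ne_zero_of_mul h,
      fun j => Finset.prod_ne_zero_iff.1 (right_ne_zero_of_mul h) j (Finset.mem_univ j)⟩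
  refine ⟨hdeg, hsep, fun t ht => ?_, fun t ht j => ?_⟩
  · have hcharpoly : (B₀ + t • B₁).charpoly.natDegree = n := by simp [charpoly_natDegree_eq_dim]
    refine isCoprime_of_resultant_ne_zero hcharpoly.le ?_ hn
      (eval_pencilDiscr B₀ B₁ t ▸ (hne ht).1)
    exact (natDegree_derivative_le _).trans (by rw [hcharpoly])
  · exact eval_krylovPoly (c j) B₀ B₁ t ▸ (hne ht).2 j

lemma isCoprime_krylovPoly_cornerShift [CharZero K] [Fintype J] [NeZero n] :
    letI D : Matrix (Fin n) (Fin n) K := diagonal fun j => ((j : ℕ) : K)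
    IsCoprime (krylovPoly (Pi.single 0 1) D (cornerShift K n))
      (pencilDiscr D (cornerShift K n) * ∏ _j : J, krylovPoly 1 D (cornerShift K n)) := by
  have hinj : Function.Injective fun j : Fin n => ((j : ℕ) : K) :=
    Nat.cast_injective.comp Fin.val_injective
  rw [krylovPoly_cornerShift]
  refine IsCoprime.pow_left ?_
  rw [← sub_zero X, ← C_0]
  refine (irreducible_X_sub_C (0 : K)).coprime_iff_not_dvd.2 ?_
  rw [dvd_iff_isRoot, IsRoot, eval_mul, eval_prod, eval_pencilDiscr, eval_krylovPoly, zero_smul,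
    add_zero, det_krylovMatrix_diagonal]
  set A : Matrix (Fin n) (Fin n) K := diagonal fun j => ((j : ℕ) : K)
  have hA : A.charpoly.Separable := by
    rw [charpoly_diagonal]
    exact separable_prod_X_sub_C_iff.2 hinj
  have hdeg : A.charpoly.natDegree = n := by simp [charpoly_natDegree_eq_dim]
  refine mul_ne_zero ?_ (Finset.prod_ne_zero_iff.2 fun _ _ => ?_)
  · have hres := resultant_ne_zero_of_isCoprime hA.ne_zero (natDegree_derivative_le _) hA
    rwa [hdeg] at hres
  · simpa using det_vandermonde_ne_zero_iff.2 hinj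

lemma exists_forall_isGenericPencil [CharZero K] [Finite J] {σ : Type*} [NeZero n] (hn : 2 ≤ n)
    (e : Fin n → MvPolynomial σ K) (B₀ B₁ : Matrix (Fin n) (Fin n) (MvPolynomial σ K))
    (c : J → Fin n → MvPolynomial σ K)
    (hspec : ∀ (e' : Fin n → K) (A₀ A₁ : Matrix (Fin n) (Fin n) K), A₀ 0 0 = 0 → A₁ 0 0 = 1 →
      ∃ a, MvPolynomial.eval a ∘ e = e' ∧ B₀.map (MvPolynomial.eval a) = A₀ ∧
        B₁.map (MvPolynomial.eval a) = A₁ ∧ ∀ j, MvPolynomial.eval a ∘ c j = 1) :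
    ∃ G : MvPolynomial σ K, G ≠ 0 ∧ ∀ a, MvPolynomial.eval a G ≠ 0 →
      IsGenericPencil (MvPolynomial.eval a ∘ e) (B₀.map (MvPolynomial.eval a))
        (B₁.map (MvPolynomial.eval a)) fun j => MvPolynomial.eval a ∘ c j := by
  have := Fintype.ofFinite J
  have hN : n.choose 2 ≠ 0 := (Nat.choose_pos hn).ne'
  obtain ⟨a₁, he₁, hB₀₁, hB₁₁, -⟩ := hspec 1 (diagonal fun j => (2 ^ (j : ℕ)) ^ 2 - 1)
    (diagonal fun j => 2 ^ (j : ℕ)) (by simp) (by simp)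
  obtain ⟨a₂, he₂, hB₀₂, hB₁₂, hc₂⟩ := hspec (Pi.single 0 1) (diagonal fun j => ((j : ℕ) : K))
    (cornerShift K n) (by simp) (by simp [cornerShift])
  obtain ⟨G₁, hG₁, hgen₁⟩ := exists_forall_eval_ne_zero_isCoprime
    (H := derivative (krylovPoly e B₀ B₁)) hN (natDegree_krylovPoly_le e B₀ B₁) a₁
    (by
      rw [map_krylovPoly, he₁, hB₀₁, hB₁₁]
      exact natDegree_and_separable_krylovPoly_diagonal_two_pow.1)
    (by
      rw [← derivative_map, map_krylovPoly, he₁, hB₀₁, hB₁₁]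
      exact natDegree_and_separable_krylovPoly_diagonal_two_pow.2)
  obtain ⟨G₂, hG₂, hgen₂⟩ := exists_forall_eval_ne_zero_isCoprime
    (H := pencilDiscr B₀ B₁ * ∏ j, krylovPoly (c j) B₀ B₁) hN (natDegree_krylovPoly_le e B₀ B₁) a₂
    (by rw [map_krylovPoly, he₂, hB₀₂, hB₁₂, krylovPoly_cornerShift, natDegree_X_pow])
    (by
      simp only [Polynomial.map_mul, Polynomial.map_prod, map_krylovPoly, map_pencilDiscr, he₂,
        hB₀₂, hB₁₂, hc₂]
      exact isCoprime_krylovPoly_cornerShift)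
  refine ⟨G₁ * G₂, mul_ne_zero hG₁ hG₂, fun a ha => ?_⟩
  rw [map_mul] at ha
  have hsep := hgen₁ a (left_ne_zero_of_mul ha)
  have hcop := (hgen₂ a (right_ne_zero_of_mul ha)).2
  simp only [← derivative_map, Polynomial.map_mul, Polynomial.map_prod, map_krylovPoly,
    map_pencilDiscr] at hsep hcop
  exact isGenericPencil_of_isCoprime (by omega) hsep.1 hsep.2 hcop

end GenericPencil

section ZariskiTopology

variable {ι : Type*} {S : Set (ι → ℂ)} {x : ι → ℂ}

lemma isTopologicalBasis_zTop (ι : Type*) : @TopologicalSpace.IsTopologicalBasis _ (zTop ι)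
    {U | ∃ p : MvPolynomial ι ℂ, U = {x | MvPolynomial.eval x p ≠ 0}} := by
  let _ := zTop ι
  refine ⟨?_, Set.eq_univ_of_forall fun x => ⟨_, ⟨1, rfl⟩, by simp⟩, rfl⟩
  rintro _ ⟨p, rfl⟩ _ ⟨q, rfl⟩ x hx
  exact ⟨_, ⟨p * q, rfl⟩, by simpa using hx, fun y hy => by simpa using hy⟩

lemma zOpen_eval_ne_zero (G : MvPolynomial ι ℂ) : zOpen {x | MvPolynomial.eval x G ≠ 0} :=
  TopologicalSpace.isOpen_generateFrom_of_mem ⟨G, rfl⟩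

lemma zDense_eval_ne_zero {G : MvPolynomial ι ℂ} (hG : G ≠ 0) :
    zDense {x | MvPolynomial.eval x G ≠ 0} := by
  let _ := zTop ι
  refine (isTopologicalBasis_zTop ι).dense_iff.2 ?_
  rintro _ ⟨p, rfl⟩ ⟨x, hx⟩
  have hp : p ≠ 0 := by rintro rfl; exact hx (map_zero _)
  by_contra hempty
  refine mul_ne_zero hp hG (MvPolynomial.funext fun y => by_contra fun hy => hempty ⟨y, ?_⟩)
  rw [map_mul, map_zero] at hy
  exact ⟨left_ne_zero_of_mul hy, right_ne_zero_of_mul hy⟩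

lemma subset_zClosure (S : Set (ι → ℂ)) : S ⊆ zClosure S :=
  @subset_closure _ (zTop ι) S

lemma eq_zero_of_mem_zClosure {f : (ι → ℂ) → ℂ} (p : MvPolynomial ι ℂ)
    (hp : ∀ y, MvPolynomial.eval y p = f y) (hf : ∀ y ∈ S, f y = 0) (hx : x ∈ zClosure S) :
    f x = 0 := by
  let _ := zTop ι
  have hclosed : IsClosed {y : ι → ℂ | f y = 0} := by
    simp only [← isOpen_compl_iff, ← hp]
    exact zOpen_eval_ne_zero p
  exact closure_minimal hf hclosed hx

end ZariskiTopology

section HomogenizedAdjugate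

variable {ι R S : Type*} [Fintype ι] [DecidableEq ι] [CommRing R] [CommRing S]

/-- For an eigenvector `v` of `A` with eigenvalue `l` this is a multiple of `adj (l - A) w`.
Replacing `l` by the pair `(A v)ₐ`, `vₐ` makes it polynomial in `A`, `v` and `w`. -/
def homogenizedAdjugate (A : Matrix ι ι R) (v w : ι → R) (a : ι) : ι → R :=
  (scalar ι ((A *ᵥ v) a) - v a • A).adjugate *ᵥ w

lemma map_homogenizedAdjugate (φ : R →+* S) (A : Matrix ι ι R) (v w : ι → R) (a : ι) :
    φ ∘ homogenizedAdjugate A v w a = homogenizedAdjugate (A.map φ) (φ ∘ v) (φ ∘ w) a := by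
  have hmap : φ.mapMatrix (scalar ι ((A *ᵥ v) a) - v a • A) =
      scalar ι ((A.map φ *ᵥ (φ ∘ v)) a) - φ (v a) • A.map φ := by
    rw [← RingHom.map_mulVec]
    ext i j
    obtain rfl | hij := eq_or_ne i j <;> simp [*]
  ext b
  rw [Function.comp_apply, homogenizedAdjugate, RingHom.map_mulVec, ← RingHom.mapMatrix_apply,
    RingHom.map_adjugate, hmap, homogenizedAdjugate, Function.comp_apply]

lemma homogenizedAdjugate_of_mulVec_eq_smul {A : Matrix ι ι R} {v : ι → R} {l : R}
    (h : A *ᵥ v = l • v) (w : ι → R) (a : ι) :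
    homogenizedAdjugate A v w a =
      v a ^ (Fintype.card ι - 1) • ((scalar ι l - A).adjugate *ᵥ w) := by
  have hfactor : scalar ι ((A *ᵥ v) a) - v a • A = v a • (scalar ι l - A) := by
    ext i j
    obtain rfl | hij := eq_or_ne i j <;> simp [mul_sub, mul_comm l, *]
  rw [homogenizedAdjugate, hfactor, adjugate_smul, smul_mulVec]

end HomogenizedAdjugate

lemma exists_eq_smul_of_minors_eq {ι K : Type*} [Field K] {u v : ι → K} (hv : v ≠ 0)
    (h : ∀ a b, u a * v b = u b * v a) : ∃ c : K, u = c • v := by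
  obtain ⟨b, hb⟩ := Function.ne_iff.1 hv
  refine ⟨u b / v b, funext fun a => ?_⟩
  rw [Pi.smul_apply, smul_eq_mul, div_mul_eq_mul_div]
  exact (eq_div_iff hb).2 (h a b)

section ClosedConditions

/-- The matrix component of the generic point of the multicone over `ℙ_s`. -/
def genericMatPart (n s : ℕ) : Matrix (Fin n) (Fin n) (MvPolynomial (MIdx n s) ℂ) :=
  Matrix.of fun i j => MvPolynomial.X (Sum.inl (i, j))

/-- The `j`-th vector component of the generic point of the multicone over `ℙ_s`. -/
def genericVecPart (n s : ℕ) (j : Fin s) : Fin n → MvPolynomial (MIdx n s) ℂ :=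
  fun a => MvPolynomial.X (Sum.inr (j, a))

variable {n s k : ℕ} {P : IdxPartition s k} {x : MIdx n s → ℂ}

lemma eval_genericMatPart (x : MIdx n s → ℂ) :
    (genericMatPart n s).map (MvPolynomial.eval x) = toMat (matPart x) := by
  ext i j
  simp [genericMatPart, toMat, matPart]

lemma eval_genericVecPart (x : MIdx n s → ℂ) (j : Fin s) :
    MvPolynomial.eval x ∘ genericVecPart n s j = vecPart x j := by
  ext a
  simp [genericVecPart, vecPart]

lemma exists_mulVec_eq_smul_of_mem_WsPcone (hx : x ∈ WsPcone n P) {j : Fin s}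
    (hj : vecPart x j ≠ 0) : ∃ l : ℂ, toMat (matPart x) *ᵥ vecPart x j = l • vecPart x j := by
  refine exists_eq_smul_of_minors_eq hj fun a b => sub_eq_zero.1 ?_
  refine eq_zero_of_mem_zClosure (f := fun y =>
    (toMat (matPart y) *ᵥ vecPart y j) a * vecPart y j b -
      (toMat (matPart y) *ᵥ vecPart y j) b * vecPart y j a)
    ((genericMatPart n s *ᵥ genericVecPart n s j) a * genericVecPart n s j b -
      (genericMatPart n s *ᵥ genericVecPart n s j) b * genericVecPart n s j a) (fun y => ?_) ?_ hx
  · simp only [map_sub, map_mul, RingHom.map_mulVec, eval_genericMatPart, ← eval_genericVecPart,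
      Function.comp_apply]
  · rintro y ⟨⟨-, hy⟩, -⟩
    obtain ⟨-, l, hl⟩ := hy j
    simp only [hl, Pi.smul_apply, smul_eq_mul]
    ring

lemma exists_eq_smul_of_mem_WsPcone (hx : x ∈ WsPcone n P) {i : Fin k} {p q : Fin s}
    (hp : p ∈ P.block i) (hq : q ∈ P.block i) (hq0 : vecPart x q ≠ 0) :
    ∃ c : ℂ, vecPart x p = c • vecPart x q := by
  refine exists_eq_smul_of_minors_eq hq0 fun a b => sub_eq_zero.1 ?_
  refine eq_zero_of_mem_zClosure (f := fun y =>
      vecPart y p a * vecPart y q b - vecPart y p b * vecPart y q a)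
    (genericVecPart n s p a * genericVecPart n s q b -
      genericVecPart n s p b * genericVecPart n s q a) (fun y => ?_) ?_ hx
  · simp only [map_sub, map_mul, ← eval_genericVecPart, Function.comp_apply]
  · rintro y ⟨-, -, hy, -⟩
    obtain ⟨c, hc⟩ := hy i p hp q hq
    have hcoord (a : Fin n) : vecPart y p a = c * vecPart y q a := congrFun hc a
    simp only [hcoord]
    ring

lemma linearIndependent_pair_of_pCompatible {v : Fin s → Fin n → ℂ} (hv : PCompatible P v)
    {i i' : Fin k} (hii' : i ≠ i') {p q : Fin s} (hp : p ∈ P.block i) (hq : q ∈ P.block i') :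
    LinearIndependent ℂ ![v p, v q] := by
  let r : Fin k → Fin s := Function.update (Function.update P.rep i' q) i p
  have hr (j : Fin k) : r j ∈ P.block j := by
    obtain rfl | hj := eq_or_ne j i
    · simpa [r] using hp
    obtain rfl | hj' := eq_or_ne j i'
    · simpa [r, hj] using hq
    · simp only [r, Function.update_of_ne hj, Function.update_of_ne hj']
      exact Finset.min'_mem _ _
  have hinj : Function.Injective ![i, i'] := by
    intro a b hab
    fin_cases a <;> fin_cases b <;> simp_all
  convert (hv.2.2 r hr).comp ![i, i'] hinj using 1
  ext a
  fin_cases a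
  · simp [r]
  · simp [r, hii'.symm]

lemma adjugate_mulVec_eq_zero_of_mem_WsPcone (hx : x ∈ WsPcone n P) {i i' : Fin k} (hii' : i ≠ i')
    {p q : Fin s} (hp : p ∈ P.block i) (hq : q ∈ P.block i') (hp0 : vecPart x p ≠ 0) {l : ℂ}
    (hl : toMat (matPart x) *ᵥ vecPart x p = l • vecPart x p) :
    (scalar (Fin n) l - toMat (matPart x)).adjugate *ᵥ vecPart x q = 0 := by
  obtain ⟨a, ha⟩ := Function.ne_iff.1 hp0
  have hzero : homogenizedAdjugate (toMat (matPart x)) (vecPart x p) (vecPart x q) a = 0 := by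
    ext1 c
    refine eq_zero_of_mem_zClosure (f := fun y =>
        homogenizedAdjugate (toMat (matPart y)) (vecPart y p) (vecPart y q) a c)
      (homogenizedAdjugate (genericMatPart n s) (genericVecPart n s p) (genericVecPart n s q) a c)
      (fun y => ?_) ?_ hx
    · rw [← eval_genericMatPart, ← eval_genericVecPart, ← eval_genericVecPart,
        ← map_homogenizedAdjugate, Function.comp_apply]
    · rintro y ⟨⟨-, hy⟩, hcompat⟩
      obtain ⟨-, l, hl⟩ := hy p
      obtain ⟨-, μ, hμ⟩ := hy q
      have hli := linearIndependent_pair_of_pCompatible hcompat hii' hp hq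
      change homogenizedAdjugate _ _ _ a c = 0
      rw [homogenizedAdjugate_of_mulVec_eq_smul hl,
        adjugate_mulVec_eq_zero_of_linearIndependent hli hl hμ, smul_zero, Pi.zero_apply]
  rw [homogenizedAdjugate_of_mulVec_eq_smul hl] at hzero
  exact (smul_eq_zero.1 hzero).resolve_left (pow_ne_zero _ ha)

end ClosedConditions

section Membership

variable {n s k : ℕ} (P : IdxPartition s k)

/-- The index of the block of `P` that contains `p`. -/
def IdxPartition.idx (p : Fin s) : Fin k := (P.cover p).choose

lemma IdxPartition.mem_block_idx (p : Fin s) : p ∈ P.block (P.idx p) := (P.cover p).choose_spec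

lemma IdxPartition.rep_mem_block (i : Fin k) : P.rep i ∈ P.block i := Finset.min'_mem _ _

variable {P}

lemma IdxPartition.idx_eq_of_mem_block {p : Fin s} {i : Fin k} (hp : p ∈ P.block i) :
    P.idx p = i := by
  by_contra hne
  exact Finset.disjoint_left.1 (P.disj _ _ hne) (P.mem_block_idx p) hp

namespace SimpleEigenbasis

variable {x : MIdx n s → ℂ} (b : SimpleEigenbasis (toMat (matPart x)))

include b in
lemma matPart_ne_zero (hn : 2 ≤ n) : matPart x ≠ 0 := by
  intro hx
  have hzero (m : Fin n) : b.eigenvalue m = 0 := by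
    have hA : toMat (matPart x) = 0 := congrArg toMat hx
    have h : b.eigenvalue m • b.basis m = 0 := (b.mulVec_basis m).symm.trans <|
      (congrArg (· *ᵥ b.basis m) hA).trans (zero_mulVec _)
    exact (smul_eq_zero.1 h).resolve_right (b.basis.ne_zero m)
  have h01 : (⟨0, by omega⟩ : Fin n) = ⟨1, by omega⟩ := b.injective (by rw [hzero, hzero])
  simp at h01

lemma mem_WsPcone (hn : 2 ≤ n) (φ : Fin k ↪ Fin n) {c : Fin s → ℂ} (hc : ∀ j, c j ≠ 0)
    (hx : ∀ j, vecPart x j = c j • b.basis (φ (P.idx j))) : x ∈ WsPcone n P := by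
  have hne (j : Fin s) : vecPart x j ≠ 0 := by
    rw [hx]
    exact smul_ne_zero (hc j) (b.basis.ne_zero _)
  refine subset_zClosure _
    ⟨⟨b.matPart_ne_zero hn, fun j => ⟨hne j, b.eigenvalue (φ (P.idx j)), ?_⟩⟩, hne,
    fun i p hp q hq => ⟨c p / c q, ?_⟩, fun r hr => ?_⟩
  · rw [hx]
    exact b.mulVec_smul_basis _ _
  · simp only [hx, P.idx_eq_of_mem_block hp, P.idx_eq_of_mem_block hq, smul_smul]
    rw [div_mul_cancel₀ _ (hc q)]
  · simp only [hx, P.idx_eq_of_mem_block (hr _)]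
    exact (b.basis.linearIndependent.comp φ φ.injective).units_smul fun i => Units.mk0 _ (hc (r i))

lemma exists_embedding_of_mem_WsPcone (hx : x ∈ WsPcone n P) (hv : ∀ j, vecPart x j ≠ 0) :
    ∃ φ : Fin k ↪ Fin n, ∀ j, ∃ c : ℂ, c ≠ 0 ∧ vecPart x j = c • b.basis (φ (P.idx j)) := by
  have heigenline (j : Fin s) : ∃ m, ∃ c : ℂ, c ≠ 0 ∧ vecPart x j = c • b.basis m := by
    obtain ⟨l, hl⟩ := exists_mulVec_eq_smul_of_mem_WsPcone hx (hv j)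
    obtain ⟨m, -, hm⟩ := b.exists_eq_smul (hv j) hl
    exact ⟨m, hm⟩
  choose ψ c hc hψ using heigenline
  have heigen (j : Fin s) :
      toMat (matPart x) *ᵥ vecPart x j = b.eigenvalue (ψ j) • vecPart x j := by
    rw [hψ]
    exact b.mulVec_smul_basis _ _
  have hsame {i : Fin k} {p q : Fin s} (hp : p ∈ P.block i) (hq : q ∈ P.block i) : ψ p = ψ q := by
    obtain ⟨d, hd⟩ := exists_eq_smul_of_mem_WsPcone hx hp hq (hv q)
    rw [hψ p, hψ q, smul_smul] at hd
    exact b.basis.linearIndependent.eq_of_smul_apply_eq_smul_apply _ _ _ _ (hc p) hd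
  have hdiff : Function.Injective fun i => ψ (P.rep i) := fun i i' hψii' => by
    by_contra hii'
    have hzero := adjugate_mulVec_eq_zero_of_mem_WsPcone hx hii' (P.rep_mem_block i)
      (P.rep_mem_block i') (hv _) (heigen _)
    refine adjugate_mulVec_eigenvector_ne_zero b.separable_charpoly (hv (P.rep i')) ?_ hzero
    rw [heigen, show ψ (P.rep i) = ψ (P.rep i') from hψii']
  refine ⟨⟨_, hdiff⟩, fun j => ⟨c j, hc j, ?_⟩⟩
  rw [hψ j, hsame (P.mem_block_idx j) (P.rep_mem_block (P.idx j)), Function.Embedding.coeFn_mk]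

end SimpleEigenbasis

end Membership

section Counting

lemma card_embedding_apply_eq {α β : Type*} [Fintype α] [Fintype β] (a : α) (b : β) :
    Nat.card {φ : α ↪ β // φ a = b} =
      (Fintype.card β - 1).descFactorial (Fintype.card α - 1) := by
  classical
  have hfiber (b' : β) : Nat.card {φ : α ↪ β // φ a = b'} = Nat.card {φ : α ↪ β // φ a = b} :=
    Nat.card_congr <| (Equiv.embeddingCongr (.refl α) (Equiv.swap b' b)).subtypeEquiv fun φ => by
      simp [Equiv.swap_apply_eq_iff]
  have htotal : Fintype.card β * Nat.card {φ : α ↪ β // φ a = b} =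
      (Fintype.card β).descFactorial (Fintype.card α) := by
    rw [← Fintype.card_embedding_eq, ← Nat.card_eq_fintype_card (α := α ↪ β),
      ← Nat.card_congr (Equiv.sigmaFiberEquiv fun φ : α ↪ β => φ a), Nat.card_sigma]
    simp only [hfiber, Finset.sum_const, Finset.card_univ, smul_eq_mul]
  obtain ⟨p, hp⟩ := Nat.exists_eq_add_one.2 (Fintype.card_pos_iff.2 ⟨a⟩)
  obtain ⟨q, hq⟩ := Nat.exists_eq_add_one.2 (Fintype.card_pos_iff.2 ⟨b⟩)
  rw [hp, hq, Nat.succ_descFactorial_succ] at htotal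
  rw [hp, hq]
  exact Nat.eq_of_mul_eq_mul_left q.succ_pos htotal

variable {n s k : ℕ} {P : IdxPartition s k}

lemma ext_of_parts {x y : MIdx n s → ℂ} (hmat : toMat (matPart x) = toMat (matPart y))
    (hvec : ∀ j, vecPart x j = vecPart y j) : x = y := by
  ext z
  obtain ⟨i, j⟩ | ⟨j, i⟩ := z
  · exact congrFun (congrFun hmat i) j
  · exact congrFun (hvec j) i

/-- The point of the multicone with matrix component `A` and vector components `v`. -/
def ofParts (A : Matrix (Fin n) (Fin n) ℂ) (v : Fin s → Fin n → ℂ) : MIdx n s → ℂ :=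
  Sum.elim (fun ij => A ij.1 ij.2) fun jk => v jk.1 jk.2

lemma toMat_matPart_ofParts (A : Matrix (Fin n) (Fin n) ℂ) (v : Fin s → Fin n → ℂ) :
    toMat (matPart (ofParts A v)) = A := rfl

/-- The points of the slice of `W_{s,P}` with matrix component `A`. -/
def sliceFiber (P : IdxPartition s k) (α : Fin s → ℂ) (c : Fin s → Fin n → ℂ) (e : Fin n → ℂ)
    (i : Fin s) (A : Matrix (Fin n) (Fin n) ℂ) : Set (MIdx n s → ℂ) :=
  {x | x ∈ WsPcone n P ∧ toMat (matPart x) = A ∧ (∀ j, α j + c j ⬝ᵥ vecPart x j = 0) ∧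
    e ⬝ᵥ vecPart x i = 0}

variable {α : Fin s → ℂ} {c : Fin s → Fin n → ℂ} {e : Fin n → ℂ} {i : Fin s}
  {A : Matrix (Fin n) (Fin n) ℂ} (b : SimpleEigenbasis A)

lemma vecPart_ne_zero_of_mem_sliceFiber (hα : ∀ j, α j ≠ 0) {x : MIdx n s → ℂ}
    (hx : x ∈ sliceFiber P α c e i A) (j : Fin s) : vecPart x j ≠ 0 := fun h0 =>
  hα j (by simpa [h0] using hx.2.2.1 j)

/-- The point with matrix component `A` whose `j`-th vector component is the multiple of the
`ψ j`-th eigenvector on the affine hyperplane `α j + c j ⬝ᵥ v = 0`. -/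
def SimpleEigenbasis.normalizedPoint (α : Fin s → ℂ) (c : Fin s → Fin n → ℂ)
    (ψ : Fin s → Fin n) : MIdx n s → ℂ :=
  ofParts A fun j => (-α j / (c j ⬝ᵥ b.basis (ψ j))) • b.basis (ψ j)

lemma SimpleEigenbasis.vecPart_normalizedPoint (ψ : Fin s → Fin n) (j : Fin s) :
    vecPart (b.normalizedPoint α c ψ) j = (-α j / (c j ⬝ᵥ b.basis (ψ j))) • b.basis (ψ j) := rfl

lemma SimpleEigenbasis.normalizedPoint_injective (hα : ∀ j, α j ≠ 0)
    (hc : ∀ j m, c j ⬝ᵥ b.basis m ≠ 0) :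
    Function.Injective (b.normalizedPoint α c : (Fin s → Fin n) → MIdx n s → ℂ) := by
  intro ψ ψ' h
  ext1 j
  have hj := congrArg (fun x => vecPart x j) h
  simp only [b.vecPart_normalizedPoint] at hj
  exact b.basis.linearIndependent.eq_of_smul_apply_eq_smul_apply _ _ _ _
    (div_ne_zero (neg_ne_zero.2 (hα j)) (hc j _)) hj

lemma SimpleEigenbasis.sliceFiber_eq_image (hn : 2 ≤ n) (hα : ∀ j, α j ≠ 0)
    (hc : ∀ j m, c j ⬝ᵥ b.basis m ≠ 0) {m : Fin n} (he : ∀ m', e ⬝ᵥ b.basis m' = 0 ↔ m' = m) :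
    sliceFiber P α c e i A =
      (fun φ : Fin k ↪ Fin n => b.normalizedPoint α c (φ ∘ P.idx)) '' {φ | φ (P.idx i) = m} := by
  have hcoeff (j m) : -α j / (c j ⬝ᵥ b.basis m) ≠ 0 := div_ne_zero (neg_ne_zero.2 (hα j)) (hc j m)
  ext x
  constructor
  · intro hx
    have hv := vecPart_ne_zero_of_mem_sliceFiber hα hx
    obtain ⟨hW, rfl, haff, hei⟩ := hx
    obtain ⟨φ, hφ⟩ := b.exists_embedding_of_mem_WsPcone hW hv
    choose d hd hφ using hφ
    refine ⟨φ, ?_, ext_of_parts (toMat_matPart_ofParts _ _) fun j => ?_⟩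
    · rw [hφ, dotProduct_smul, smul_eq_zero] at hei
      exact (he _).1 (hei.resolve_left (hd i))
    · have haffj := haff j
      rw [hφ, dotProduct_smul, smul_eq_mul] at haffj
      have hdj : d j = -α j / (c j ⬝ᵥ b.basis (φ (P.idx j))) :=
        (eq_div_iff (hc j _)).2 (by linear_combination haffj)
      rw [hφ, hdj, b.vecPart_normalizedPoint, Function.comp_apply]
  · rintro ⟨φ, hφ, rfl⟩
    refine ⟨SimpleEigenbasis.mem_WsPcone (x := b.normalizedPoint α c (φ ∘ P.idx)) b hn φ
      (fun j => hcoeff j _) fun j => rfl, toMat_matPart_ofParts _ _,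
      fun j => ?_, ?_⟩
    · simp only [b.vecPart_normalizedPoint, dotProduct_smul, smul_eq_mul,
        div_mul_cancel₀ _ (hc j _), add_neg_cancel]
    · simp only [b.vecPart_normalizedPoint, dotProduct_smul, Function.comp_apply, (he _).2 hφ,
        smul_zero]

lemma SimpleEigenbasis.encard_sliceFiber (hn : 2 ≤ n) (hα : ∀ j, α j ≠ 0)
    (hc : ∀ j m, c j ⬝ᵥ b.basis m ≠ 0) {m : Fin n} (he : ∀ m', e ⬝ᵥ b.basis m' = 0 ↔ m' = m) :
    (sliceFiber P α c e i A).encard = ((n - 1).descFactorial (k - 1) : ℕ) := by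
  have hidx : Function.Surjective P.idx := fun l => ⟨_, P.idx_eq_of_mem_block (P.rep_mem_block l)⟩
  have hinj : Function.Injective fun φ : Fin k ↪ Fin n => b.normalizedPoint α c (φ ∘ P.idx) :=
    (b.normalizedPoint_injective hα hc).comp
      (hidx.injective_comp_right.comp DFunLike.coe_injective)
  rw [b.sliceFiber_eq_image hn hα hc he, hinj.encard_image, ← (Set.toFinite _).cast_ncard_eq]
  exact congrArg _ ((card_embedding_apply_eq (P.idx i) m).trans (by simp))

end Counting

section PencilCount

variable {n s k : ℕ} {P : IdxPartition s k} {α : Fin s → ℂ} {c : Fin s → Fin n → ℂ}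
  {e : Fin n → ℂ} {i : Fin s} {B₀ B₁ : Matrix (Fin n) (Fin n) ℂ} {D : ℂ}

/-- The slice whose matrix component is constrained to the affine line `D⁻¹ (B₀ + t B₁)`, whose
vector components are normalised by `α j + c j ⬝ᵥ v = 0`, and whose `i`-th vector component lies on
the hyperplane `e = 0`. -/
def pencilSlice (D : ℂ) (B₀ B₁ : Matrix (Fin n) (Fin n) ℂ) (α : Fin s → ℂ) (c : Fin s → Fin n → ℂ)
    (e : Fin n → ℂ) (i : Fin s) : Set (MIdx n s → ℂ) :=
  {x | (∃ t : ℂ, D • toMat (matPart x) = B₀ + t • B₁) ∧ (∀ j, α j + c j ⬝ᵥ vecPart x j = 0) ∧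
    e ⬝ᵥ vecPart x i = 0}

lemma isRoot_krylovPoly_of_mem_WsPcone {x : MIdx n s → ℂ} (hx : x ∈ WsPcone n P) {t : ℂ}
    (ht : D • toMat (matPart x) = B₀ + t • B₁) (hi : vecPart x i ≠ 0)
    (hei : e ⬝ᵥ vecPart x i = 0) : (krylovPoly e B₀ B₁).IsRoot t := by
  obtain ⟨l, hl⟩ := exists_mulVec_eq_smul_of_mem_WsPcone hx hi
  rw [IsRoot, eval_krylovPoly]
  by_contra hdet
  refine dotProduct_ne_zero_of_det_krylovMatrix_ne_zero hdet hi (l := D * l) ?_ hei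
  rw [← ht, smul_mulVec, hl, smul_smul]

lemma WsPcone_inter_pencilSlice (hne : krylovPoly e B₀ B₁ ≠ 0) (hα : α i ≠ 0)
    (hD : D ≠ 0) :
    WsPcone n P ∩ pencilSlice D B₀ B₁ α c e i =
      ⋃ t ∈ ((krylovPoly e B₀ B₁).roots.toFinset : Set ℂ),
        sliceFiber P α c e i (D⁻¹ • (B₀ + t • B₁)) := by
  ext x
  simp only [Set.mem_iUnion, Finset.mem_coe, Multiset.mem_toFinset, mem_roots hne, exists_prop]
  constructor
  · rintro ⟨hW, ⟨t, ht⟩, haff, hei⟩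
    have hv : vecPart x i ≠ 0 := fun h0 => hα (by simpa [h0] using haff i)
    exact ⟨t, isRoot_krylovPoly_of_mem_WsPcone hW ht hv hei, hW,
      (eq_inv_smul_iff₀ hD).2 ht, haff, hei⟩
  · rintro ⟨t, -, hW, hA, haff, hei⟩
    exact ⟨hW, ⟨t, (eq_inv_smul_iff₀ hD).1 hA⟩, haff, hei⟩

namespace IsGenericPencil

variable (h : IsGenericPencil e B₀ B₁ c)
include h

lemma exists_forall_dotProduct_eq_zero_iff {t : ℂ} (ht : (krylovPoly e B₀ B₁).IsRoot t)
    (b : SimpleEigenbasis (B₀ + t • B₁)) : ∃ m, ∀ m', e ⬝ᵥ b.basis m' = 0 ↔ m' = m := by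
  obtain ⟨m, hm⟩ := (b.det_krylovMatrix_eq_zero_iff e).1 ((eval_krylovPoly e B₀ B₁ t).symm.trans ht)
  refine ⟨m, fun m' => ⟨fun hm' => by_contra fun hne => ?_, fun hm' => hm' ▸ hm⟩⟩
  have hdvd := X_sub_C_sq_dvd_krylovPoly b hne hm' hm
  rw [sq] at hdvd
  exact not_isUnit_X_sub_C t (h.separable.squarefree _ hdvd)

lemma encard_sliceFiber (hn : 2 ≤ n) (hα : ∀ j, α j ≠ 0) (hD : D ≠ 0) {t : ℂ}
    (ht : (krylovPoly e B₀ B₁).IsRoot t) :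
    (sliceFiber P α c e i (D⁻¹ • (B₀ + t • B₁))).encard = ((n - 1).descFactorial (k - 1) : ℕ) := by
  obtain ⟨b⟩ := nonempty_simpleEigenbasis (h.separable_charpoly t ht)
  obtain ⟨m, hm⟩ := h.exists_forall_dotProduct_eq_zero_iff ht b
  have hc (j m) : c j ⬝ᵥ b.basis m ≠ 0 := fun h0 =>
    h.det_ne_zero t ht j ((b.det_krylovMatrix_eq_zero_iff (c j)).2 ⟨m, h0⟩)
  exact (b.smul (inv_ne_zero hD)).encard_sliceFiber hn hα hc hm

lemma card_roots_toFinset : (krylovPoly e B₀ B₁).roots.toFinset.card = n.choose 2 := by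
  rw [Multiset.toFinset_card_of_nodup (nodup_roots h.separable),
    ← (IsAlgClosed.splits _).natDegree_eq_card_roots, h.natDegree_eq]

lemma pencil_direction_ne_zero (hn : 2 ≤ n) : B₁ ≠ 0 := by
  rintro rfl
  have hconst : krylovPoly e B₀ 0 = C (krylovMatrix e B₀).det := by
    simp [krylovPoly, pencil, map_det_krylovMatrix]
  have hdeg := h.natDegree_eq
  rw [hconst, natDegree_C] at hdeg
  exact (Nat.choose_pos hn).ne hdeg

lemma pairwiseDisjoint_sliceFiber (hn : 2 ≤ n) (hD : D ≠ 0) (T : Set ℂ) :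
    T.PairwiseDisjoint fun t => sliceFiber P α c e i (D⁻¹ • (B₀ + t • B₁)) := by
  refine fun t _ t' _ hne => Set.disjoint_left.2 fun x hx hx' => hne ?_
  have heq := smul_right_injective _ (inv_ne_zero hD) (hx.2.1.symm.trans hx'.2.1)
  exact smul_left_injective ℂ (h.pencil_direction_ne_zero hn) (add_left_cancel heq)

lemma ncard_WsPcone_inter_pencilSlice (hn : 2 ≤ n) (hα : ∀ j, α j ≠ 0) (hD : D ≠ 0) :
    (WsPcone n P ∩ pencilSlice D B₀ B₁ α c e i).ncard =
      n.choose 2 * (n - 1).descFactorial (k - 1) := by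
  have hfiber (t) (ht : t ∈ (krylovPoly e B₀ B₁).roots.toFinset) :=
    h.encard_sliceFiber (P := P) (i := i) hn hα hD
      (isRoot_of_mem_roots (Multiset.mem_toFinset.1 ht))
  rw [WsPcone_inter_pencilSlice h.separable.ne_zero (hα i) hD, Set.ncard, ← h.card_roots_toFinset,
    (Finset.finite_toSet _).encard_biUnion (h.pairwiseDisjoint_sliceFiber hn hD _),
    finsum_mem_coe_finset, Finset.sum_congr rfl hfiber, Finset.sum_const, nsmul_eq_mul,
    ← Nat.cast_mul, ENat.toNat_natCast]

end IsGenericPencil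

end PencilCount

section AffineLine

variable {ι ρ R S : Type*} [CommRing R] [CommRing S] (E : Option ρ ≃ ι) (m : ρ → ι → R) (m₀ : ρ → R)
  {A₀ A₁ : ι → R}

/-- The right-hand side `-m₀` of the linear system `m₀ + m x = 0`, completed by `0` for one further
equation. The equations are indexed by `ι` through `E`, the further one being `E none`. -/
def completedRhs : ι → R := fun z => (E.symm z).elim 0 fun r => -m₀ r

lemma map_completedRhs (φ : R →+* S) : φ ∘ completedRhs E m₀ = completedRhs E (φ ∘ m₀) := by
  ext z
  obtain ⟨_ | r, rfl⟩ := E.surjective z <;> simp [completedRhs]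

variable [DecidableEq ι]

/-- The coefficient matrix of the linear system `m₀ + m x = 0` in one more unknown than equations,
completed by the coordinate functional of the unknown `E none`. -/
def completedMatrix : Matrix ι ι R :=
  of fun z => (E.symm z).elim (Pi.single (E none) 1) m

lemma map_completedMatrix (φ : R →+* S) :
    (completedMatrix E m).map φ = completedMatrix E fun r => φ ∘ m r := by
  ext z z'
  obtain ⟨_ | r, rfl⟩ := E.surjective z
  · simp [completedMatrix, Pi.single_apply, apply_ite φ]
  · simp [completedMatrix]

/-- The linear parts of the equations `x z - A₁ z * x (E none) = A₀ z`, for `z ≠ E none`, of the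
line `A₀ + t A₁`, where `A₀ (E none) = 0` and `A₁ (E none) = 1`. -/
def lineEquations (A₁ : ι → R) (r : ρ) : ι → R :=
  Pi.single (E (some r)) 1 - A₁ (E (some r)) • Pi.single (E none) 1

lemma completedMatrix_lineEquations :
    completedMatrix E (lineEquations E A₁) =
      1 - vecMulVec (A₁ - A₁ (E none) • Pi.single (E none) 1) (Pi.single (E none) 1) := by
  ext z z'
  obtain ⟨_ | r, rfl⟩ := E.surjective z
  · simp [completedMatrix, vecMulVec_apply, Matrix.one_apply, Pi.single_apply, eq_comm]
  · simp [completedMatrix, lineEquations, vecMulVec_apply, Matrix.one_apply,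
      Pi.single_apply, eq_comm]

variable [Fintype ι]

lemma map_cramer (φ : R →+* S) (M : Matrix ι ι R) (b : ι → R) :
    φ ∘ cramer M b = cramer (M.map φ) (φ ∘ b) := by
  ext z
  rw [Function.comp_apply, cramer_eq_adjugate_mulVec, RingHom.map_mulVec, cramer_eq_adjugate_mulVec,
    ← RingHom.mapMatrix_apply, RingHom.map_adjugate, RingHom.mapMatrix_apply]

/-- By Cramer's rule the solutions of `m₀ + m x = 0` form the line
`(lineBase E m m₀ + t • lineDirection E m) / det`. -/
def lineBase : ι → R :=
  cramer (completedMatrix E m) (completedRhs E m₀)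

/-- The direction of the line through `lineBase E m m₀`. -/
def lineDirection : ι → R :=
  cramer (completedMatrix E m) (Pi.single (E none) 1)

lemma map_lineBase (φ : R →+* S) :
    φ ∘ lineBase E m m₀ = lineBase E (fun r => φ ∘ m r) (φ ∘ m₀) := by
  rw [lineBase, map_cramer, map_completedMatrix, map_completedRhs, lineBase]

lemma map_lineDirection (φ : R →+* S) :
    φ ∘ lineDirection E m = lineDirection E fun r => φ ∘ m r := by
  have hsingle : φ ∘ Pi.single (E none) 1 = Pi.single (E none) 1 := by
    ext z
    simp [Pi.single_apply, apply_ite φ]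
  rw [lineDirection, map_cramer, map_completedMatrix, hsingle, lineDirection]

lemma mulVec_eq_iff_det_smul_eq_cramer [IsDomain R] {M : Matrix ι ι R} (hM : M.det ≠ 0)
    (x b : ι → R) : M *ᵥ x = b ↔ M.det • x = cramer M b := by
  constructor
  · rintro rfl
    rw [cramer_eq_adjugate_mulVec, mulVec_mulVec, adjugate_mul, smul_mulVec, one_mulVec]
  · intro h
    refine smul_right_injective _ hM ?_
    change M.det • (M *ᵥ x) = M.det • b
    rw [← mulVec_smul, h, mulVec_cramer]

lemma forall_add_dotProduct_eq_zero_iff_exists_mulVec (x : ι → R) :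
    (∀ r, m₀ r + m r ⬝ᵥ x = 0) ↔
      ∃ t : R, completedMatrix E m *ᵥ x = completedRhs E m₀ + t • Pi.single (E none) 1 := by
  have hrow (r : ρ) : (completedMatrix E m *ᵥ x) (E (some r)) = m r ⬝ᵥ x := by
    simp [completedMatrix, mulVec]
  constructor
  · refine fun h => ⟨x (E none), funext fun z => ?_⟩
    obtain ⟨_ | r, rfl⟩ := E.surjective z
    · simp [completedMatrix, completedRhs, mulVec]
    · rw [hrow, eq_neg_of_add_eq_zero_right (h r)]
      simp [completedRhs]
  · rintro ⟨t, ht⟩ r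
    rw [← hrow, ht]
    simp [completedRhs]

lemma forall_add_dotProduct_eq_zero_iff_exists_line [IsDomain R]
    (hdet : (completedMatrix E m).det ≠ 0) (x : ι → R) :
    (∀ r, m₀ r + m r ⬝ᵥ x = 0) ↔
      ∃ t : R, (completedMatrix E m).det • x = lineBase E m m₀ + t • lineDirection E m := by
  simp only [forall_add_dotProduct_eq_zero_iff_exists_mulVec E,
    mulVec_eq_iff_det_smul_eq_cramer hdet, map_add, map_smul, lineBase, lineDirection]

lemma det_completedMatrix_lineEquations : (completedMatrix E (lineEquations E A₁)).det = 1 := by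
  rw [completedMatrix_lineEquations, vecMulVec_eq Unit, det_one_sub_mul_comm]
  simp

lemma completedMatrix_lineEquations_mulVec (x : ι → R) :
    completedMatrix E (lineEquations E A₁) *ᵥ x =
      x - x (E none) • (A₁ - A₁ (E none) • Pi.single (E none) 1) := by
  rw [completedMatrix_lineEquations, sub_mulVec, one_mulVec, vecMulVec_mulVec,
    single_one_dotProduct, op_smul_eq_smul]

lemma cramer_completedMatrix_lineEquations_mulVec (x : ι → R) :
    cramer (completedMatrix E (lineEquations E A₁))
      (completedMatrix E (lineEquations E A₁) *ᵥ x) = x := by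
  rw [cramer_eq_adjugate_mulVec, mulVec_mulVec, adjugate_mul, det_completedMatrix_lineEquations,
    one_smul, one_mulVec]

lemma lineBase_lineEquations (h₀ : A₀ (E none) = 0) :
    lineBase E (lineEquations E A₁) (fun r => -A₀ (E (some r))) = A₀ := by
  have hrhs : completedRhs E (fun r => -A₀ (E (some r))) =
      completedMatrix E (lineEquations E A₁) *ᵥ A₀ := by
    rw [completedMatrix_lineEquations_mulVec, h₀, zero_smul, sub_zero]
    ext z
    obtain ⟨_ | r, rfl⟩ := E.surjective z <;> simp [completedRhs, h₀]
  rw [lineBase, hrhs, cramer_completedMatrix_lineEquations_mulVec]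

lemma lineDirection_lineEquations (h₁ : A₁ (E none) = 1) :
    lineDirection E (lineEquations E A₁) = A₁ := by
  have hrhs : Pi.single (E none) 1 = completedMatrix E (lineEquations E A₁) *ᵥ A₁ := by
    simp [completedMatrix_lineEquations_mulVec, h₁]
  rw [lineDirection, hrhs, cramer_completedMatrix_lineEquations_mulVec]

end AffineLine

section Slices

/-- A numbering of the equations of a slice of type `γ` that meets the matrix component in a line
and the `j`-th vector component in codimension one, or two if `j = i`. The equations of the matrix
component are matched with all coordinates but `coord none`. -/
structure SliceFrame (n : ℕ) {s : ℕ} (γ : Fin (s + 1) → ℕ) (i : Fin s) where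
  coord : Option (Fin (n ^ 2 - γ 0)) ≃ Fin n × Fin n
  norm : ∀ j : Fin s, Fin (n - γ j.succ)
  extra : Fin (n - γ i.succ)
  extra_ne_norm : extra ≠ norm i
  eq_norm_or_eq_extra : ∀ (j : Fin s) (r : Fin (n - γ j.succ)),
    r = norm j ∨ (⟨j, r⟩ : Σ j : Fin s, Fin (n - γ j.succ)) = ⟨i, extra⟩

lemma exists_optionEquiv {ρ ι : Type*} [Fintype ρ] [Fintype ι]
    (h : Fintype.card ρ + 1 = Fintype.card ι) (z : ι) : ∃ E : Option ρ ≃ ι, E none = z := by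
  classical
  obtain ⟨E⟩ := Fintype.card_eq.1 ((Fintype.card_option (α := ρ)).trans h)
  exact ⟨E.trans (Equiv.swap (E none) z), Equiv.swap_apply_left _ _⟩

lemma exists_sliceFrame_specialExp {n s : ℕ} (hn : 2 ≤ n) (i : Fin s) (z : Fin n × Fin n) :
    ∃ F : SliceFrame n (specialExp n s i) i, F.coord none = z := by
  have h₀ : specialExp n s i 0 = 1 := if_pos rfl
  have hi : specialExp n s i i.succ = n - 2 := by simp [specialExp, Fin.succ_ne_zero]
  have hj (j : Fin s) (hj : j ≠ i) : specialExp n s i j.succ = n - 1 := by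
    simp [specialExp, Fin.succ_ne_zero, hj]
  have hpos (j : Fin s) : 0 < n - specialExp n s i j.succ := by
    obtain rfl | hji := eq_or_ne j i
    · omega
    · have := hj j hji
      omega
  have hsq : 0 < n ^ 2 := by positivity
  obtain ⟨E, hE⟩ := exists_optionEquiv (ρ := Fin (n ^ 2 - specialExp n s i 0))
    (by rw [h₀, Fintype.card_fin, Fintype.card_prod, Fintype.card_fin, ← sq]; omega) z
  refine ⟨⟨E, fun j => ⟨0, hpos j⟩, ⟨1, by omega⟩, by simp, fun j r => ?_⟩, hE⟩
  obtain rfl | hji := eq_or_ne j i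
  · rw [Sigma.mk.injEq, heq_eq_eq, eq_self, true_and, Fin.ext_iff, Fin.ext_iff]
    dsimp only
    omega
  · have := hj j hji
    exact .inl (Fin.ext (by dsimp only; omega))

lemma eval_comp_X {σ R : Type*} [CommSemiring R] (a : σ → R) :
    MvPolynomial.eval a ∘ MvPolynomial.X = a :=
  funext fun _ => MvPolynomial.eval_X _

namespace SliceFrame

variable {n s : ℕ} {γ : Fin (s + 1) → ℕ} {i : Fin s} (F : SliceFrame n γ i)
  {R S : Type*} [CommRing R] [CommRing S] (a : MSliceParam n s γ → R)

/-- The common denominator of the line of matrices in the slice with parameters `a`. -/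
def denom : R := (completedMatrix F.coord fun r z => a (.inl (r, some z))).det

/-- The line of matrices in the slice is `(F.base a + t • F.direction a) / F.denom a`. -/
def base : Matrix (Fin n) (Fin n) R :=
  of fun p q =>
    lineBase F.coord (fun r z => a (.inl (r, some z))) (fun r => a (.inl (r, none))) (p, q)

/-- The direction of the line of matrices in the slice. -/
def direction : Matrix (Fin n) (Fin n) R :=
  of fun p q => lineDirection F.coord (fun r z => a (.inl (r, some z))) (p, q)

/-- The constant term of the equation `F.norm j`, which normalises the `j`-th vector. -/
def offset (j : Fin s) : R := a (.inr (⟨j, F.norm j⟩, none))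

/-- The linear part of the equation `F.norm j`. -/
def functional (j : Fin s) (q : Fin n) : R := a (.inr (⟨j, F.norm j⟩, some q))

/-- The homogeneous equation left by `F.extra` after eliminating its constant term by `F.norm i`. -/
def eliminated (q : Fin n) : R :=
  a (.inr (⟨i, F.extra⟩, none)) * F.functional a i q -
    F.offset a i * a (.inr (⟨i, F.extra⟩, some q))

lemma map_denom (φ : R →+* S) : φ (F.denom a) = F.denom (φ ∘ a) := by
  rw [denom, RingHom.map_det, RingHom.mapMatrix_apply, map_completedMatrix]
  rfl

lemma map_base (φ : R →+* S) : (F.base a).map φ = F.base (φ ∘ a) := by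
  ext p q
  exact congrFun (map_lineBase F.coord _ _ φ) (p, q)

lemma map_direction (φ : R →+* S) : (F.direction a).map φ = F.direction (φ ∘ a) := by
  ext p q
  exact congrFun (map_lineDirection F.coord _ φ) (p, q)

lemma map_offset (φ : R →+* S) (j : Fin s) : φ (F.offset a j) = F.offset (φ ∘ a) j := rfl

lemma map_functional (φ : R →+* S) (j : Fin s) : φ ∘ F.functional a j = F.functional (φ ∘ a) j :=
  rfl

lemma map_eliminated (φ : R →+* S) : φ ∘ F.eliminated a = F.eliminated (φ ∘ a) := by
  ext q
  simp [eliminated, functional, offset]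

lemma norm_ne_extra (j : Fin s) :
    (⟨j, F.norm j⟩ : Σ j : Fin s, Fin (n - γ j.succ)) ≠ ⟨i, F.extra⟩ := by
  intro h
  obtain ⟨rfl, h⟩ := Sigma.mk.inj h
  exact F.extra_ne_norm (eq_of_heq h).symm

lemma forall_equations_iff (p : (Σ j : Fin s, Fin (n - γ j.succ)) → Prop) :
    (∀ j r, p ⟨j, r⟩) ↔ (∀ j, p ⟨j, F.norm j⟩) ∧ p ⟨i, F.extra⟩ := by
  refine ⟨fun h => ⟨fun j => h j _, h i _⟩, fun ⟨hnorm, hextra⟩ j r => ?_⟩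
  obtain rfl | hr := F.eq_norm_or_eq_extra j r
  · exact hnorm j
  · exact hr ▸ hextra

lemma mSlice_eq_pencilSlice {a : MSliceParam n s γ → ℂ} (hdenom : F.denom a ≠ 0)
    (hoffset : F.offset a i ≠ 0) :
    mSlice γ a = pencilSlice (F.denom a) (F.base a) (F.direction a) (F.offset a) (F.functional a)
      (F.eliminated a) i := by
  ext x
  refine and_congr ?_ ((F.forall_equations_iff fun jr => a (.inr (jr, none)) +
    ∑ q, a (.inr (jr, some q)) * x (.inr (jr.1, q)) = 0).trans (and_congr_right fun hnorm => ?_))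
  · refine (forall_add_dotProduct_eq_zero_iff_exists_line F.coord _ _ hdenom (matPart x)).trans
      (exists_congr fun t => ?_)
    rw [← Matrix.ext_iff, funext_iff, Prod.forall]
    rfl
  · have helim : F.eliminated a ⬝ᵥ vecPart x i =
        a (.inr (⟨i, F.extra⟩, none)) * (F.functional a i ⬝ᵥ vecPart x i) -
          F.offset a i * ((fun q => a (.inr (⟨i, F.extra⟩, some q))) ⬝ᵥ vecPart x i) := by
      simp only [eliminated, dotProduct, Finset.mul_sum, ← Finset.sum_sub_distrib]
      exact Finset.sum_congr rfl fun q _ => by ring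
    have hi : F.offset a i + F.functional a i ⬝ᵥ vecPart x i = 0 := hnorm i
    rw [helim, ← mul_right_inj' hoffset, mul_zero]
    change _ * (_ + (fun q => a (.inr (⟨i, F.extra⟩, some q))) ⬝ᵥ vecPart x i) = 0 ↔ _
    constructor <;> intro h
    · linear_combination a (.inr (⟨i, F.extra⟩, none)) * hi - h
    · linear_combination a (.inr (⟨i, F.extra⟩, none)) * hi - h

/-- Parameters of a slice that consists of the line of matrices `A₀ + t A₁`, with all normalising
equations `1 + ∑ v = 0` and eliminated equation `e`. -/
def paramsOf (A₀ A₁ : Matrix (Fin n) (Fin n) R) (e : Fin n → R) : MSliceParam n s γ → R :=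
  Sum.elim
    (fun p => p.2.elim (-Function.uncurry A₀ (F.coord (some p.1)))
      (lineEquations F.coord (Function.uncurry A₁) p.1))
    (open Classical in fun p => if p.1 = ⟨i, F.extra⟩ then p.2.elim 0 (-e) else 1)

variable (A₀ A₁ : Matrix (Fin n) (Fin n) R) (e : Fin n → R)

lemma offset_paramsOf (j : Fin s) : F.offset (F.paramsOf A₀ A₁ e) j = 1 :=
  if_neg (F.norm_ne_extra j)

lemma functional_paramsOf (j : Fin s) : F.functional (F.paramsOf A₀ A₁ e) j = 1 :=
  funext fun _ => if_neg (F.norm_ne_extra j)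

lemma eliminated_paramsOf : F.eliminated (F.paramsOf A₀ A₁ e) = e := by
  ext q
  rw [eliminated, offset_paramsOf]
  simp [paramsOf]

lemma denom_paramsOf : F.denom (F.paramsOf A₀ A₁ e) = 1 :=
  det_completedMatrix_lineEquations F.coord

variable {A₀ A₁}

lemma base_paramsOf {z : Fin n} (hz : F.coord none = (z, z)) (h₀ : A₀ z z = 0) :
    F.base (F.paramsOf A₀ A₁ e) = A₀ := by
  ext p q
  exact congrFun (lineBase_lineEquations F.coord (A₀ := Function.uncurry A₀) (hz ▸ h₀)) (p, q)

lemma direction_paramsOf {z : Fin n} (hz : F.coord none = (z, z)) (h₁ : A₁ z z = 1) :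
    F.direction (F.paramsOf A₀ A₁ e) = A₁ := by
  ext p q
  exact congrFun (lineDirection_lineEquations F.coord (A₁ := Function.uncurry A₁) (hz ▸ h₁)) (p, q)

lemma exists_ne_zero_forall_isGenericPencil [NeZero n] (hn : 2 ≤ n) (hF : F.coord none = (0, 0)) :
    ∃ G : MvPolynomial (MSliceParam n s γ) ℂ, G ≠ 0 ∧ ∀ b, MvPolynomial.eval b G ≠ 0 →
      IsGenericPencil (F.eliminated b) (F.base b) (F.direction b) (F.functional b) := by
  have hspec := exists_forall_isGenericPencil hn
    (F.eliminated (R := MvPolynomial (MSliceParam n s γ) ℂ) MvPolynomial.X)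
    (F.base MvPolynomial.X) (F.direction MvPolynomial.X) (F.functional MvPolynomial.X)
  simp only [F.map_eliminated, F.map_base, F.map_direction, F.map_functional, eval_comp_X] at hspec
  exact hspec fun e A₀ A₁ h₀ h₁ => ⟨F.paramsOf A₀ A₁ e, F.eliminated_paramsOf A₀ A₁ e,
    F.base_paramsOf e hF h₀, F.direction_paramsOf e hF h₁, F.functional_paramsOf A₀ A₁ e⟩

lemma denom_X_ne_zero :
    F.denom (MvPolynomial.X : MSliceParam n s γ → MvPolynomial (MSliceParam n s γ) ℂ) ≠ 0 := by
  intro h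
  have heval := F.map_denom MvPolynomial.X (MvPolynomial.eval (F.paramsOf (R := ℂ) 0 0 0))
  rw [h, map_zero, eval_comp_X, F.denom_paramsOf] at heval
  exact zero_ne_one heval

end SliceFrame

end Slices

section Multidegree

variable {n s k : ℕ}

lemma hasMD_of_generic_ne_zero {W : Set (MIdx n s → ℂ)} {γ : Fin (s + 1) → ℕ} {δ : ℕ}
    {G : MvPolynomial (MSliceParam n s γ) ℂ} (hG : G ≠ 0)
    (h : ∀ a, MvPolynomial.eval a G ≠ 0 → (W ∩ mSlice γ a).ncard = δ) : hasMD W γ δ :=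
  ⟨_, zOpen_eval_ne_zero G, zDense_eval_ne_zero hG, h⟩

lemma hasMD_WsPcone_of_two_le (hn : 2 ≤ n) (P : IdxPartition s k) (i : Fin s) :
    hasMD (WsPcone n P) (specialExp n s i) (n.choose 2 * (n - 1).descFactorial (k - 1)) := by
  have : NeZero n := ⟨by omega⟩
  obtain ⟨F, hF⟩ := exists_sliceFrame_specialExp hn i (0, 0)
  obtain ⟨G, hG, hgeneric⟩ := F.exists_ne_zero_forall_isGenericPencil hn hF
  have hoffset : ∏ j, F.offset (R := MvPolynomial _ ℂ) MvPolynomial.X j ≠ 0 :=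
    Finset.prod_ne_zero_iff.2 fun _ _ => MvPolynomial.X_ne_zero _
  refine hasMD_of_generic_ne_zero (mul_ne_zero (mul_ne_zero hG F.denom_X_ne_zero) hoffset)
    fun b hb => ?_
  simp only [map_mul, mul_ne_zero_iff, map_prod, Finset.prod_ne_zero_iff, F.map_denom,
    F.map_offset, eval_comp_X, Finset.mem_univ, true_imp_iff] at hb
  obtain ⟨⟨hGb, hdenom⟩, hoffset⟩ := hb
  rw [F.mSlice_eq_pencilSlice hdenom (hoffset i)]
  exact (hgeneric b hGb).ncard_WsPcone_inter_pencilSlice hn hoffset hdenom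

lemma pCompatible_of_forall_ne_zero (P : IdxPartition 1 k) {v : Fin 1 → Fin n → ℂ}
    (hv : ∀ j, v j ≠ 0) : PCompatible P v := by
  have hk : Subsingleton (Fin k) := ⟨fun i i' => by
    rw [← P.idx_eq_of_mem_block (P.rep_mem_block i), ← P.idx_eq_of_mem_block (P.rep_mem_block i'),
      Subsingleton.elim (P.rep i)]⟩
  refine ⟨hv, fun _ p _ q _ => ⟨1, ?_⟩, fun r _ => ?_⟩
  · rw [one_smul, Subsingleton.elim p]
  · exact (linearIndependent_subsingleton_index_iff _).2 fun i => hv (r i)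

lemma ofParts_mem_WsPcone_one (P : IdxPartition 1 k) {A : Matrix (Fin 1) (Fin 1) ℂ}
    {v : Fin 1 → Fin 1 → ℂ} (hA : A ≠ 0) (hv : ∀ j, v j ≠ 0) : ofParts A v ∈ WsPcone 1 P := by
  refine subset_zClosure _ ⟨⟨fun h => hA (congrArg toMat h), fun j => ⟨hv j, A 0 0, ?_⟩⟩,
    pCompatible_of_forall_ne_zero P hv⟩
  change A *ᵥ v j = A 0 0 • v j
  ext q
  simp [mulVec, dotProduct, Subsingleton.elim q 0]

/-- The intersection is infinite, and its `ncard` takes the junk value `0`. -/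
lemma hasMD_WsPcone_one (P : IdxPartition 1 k) (i : Fin 1) :
    hasMD (WsPcone 1 P) (specialExp 1 1 i) 0 := by
  obtain rfl := Subsingleton.elim i 0
  let α : MSliceParam 1 1 (specialExp 1 1 0) := .inr (⟨0, ⟨0, by simp [specialExp]⟩⟩, none)
  let c : MSliceParam 1 1 (specialExp 1 1 0) := .inr (⟨0, ⟨0, by simp [specialExp]⟩⟩, some 0)
  refine hasMD_of_generic_ne_zero (mul_ne_zero (MvPolynomial.X_ne_zero α)
    (MvPolynomial.X_ne_zero c)) fun a ha => Set.Infinite.ncard ?_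
  rw [map_mul, MvPolynomial.eval_X, MvPolynomial.eval_X, mul_ne_zero_iff] at ha
  obtain ⟨hα, hc⟩ := ha
  let x (t : ℕ) : MIdx 1 1 → ℂ := ofParts (of fun _ _ => t + 1) fun _ _ => -a α / a c
  have hx : Function.Injective x := fun t t' h => by
    simpa [x, ofParts] using congrFun h (.inl (0, 0))
  refine Set.infinite_of_injective_forall_mem hx fun t => ⟨ofParts_mem_WsPcone_one P ?_ ?_, ?_, ?_⟩
  · exact fun h => Nat.cast_add_one_ne_zero t (congrFun (congrFun h 0) 0)
  · exact fun _ h => div_ne_zero (neg_ne_zero.2 hα) hc (congrFun h 0)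
  · exact fun r => absurd r.2 (by simp [specialExp])
  · rintro j ⟨r, hr⟩
    obtain rfl := Subsingleton.elim j 0
    obtain rfl : r = 0 := by omega
    rw [Fin.sum_univ_one]
    change a α + a c * (-a α / a c) = 0
    rw [mul_div_cancel₀ _ hc, add_neg_cancel]

end Multidegree

theorem WsP_coefficient_value_general {n s k : ℕ} (h : 2 ≤ n ∨ s ≤ n) (P : IdxPartition s k)
    (i : Fin s) :
    hasMD (WsPcone n P) (specialExp n s i) (n.choose 2 * (n - 1).descFactorial (k - 1)) := by
  by_cases hn : 2 ≤ n
  · exact hasMD_WsPcone_of_two_le hn P i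
  · have hs := i.pos
    obtain ⟨rfl, rfl⟩ : n = 1 ∧ s = 1 := by omega
    simpa using hasMD_WsPcone_one P i

/-- For every partition `P` of `{1, …, s}`, the coefficient `c_{s,P}` of
`h_0 ∑_i h_1^{n-1} ⋯ h_i^{n-2} ⋯ h_s^{n-1}` in `[W_{s,P}]` equals
`binom(n,2) · (n-1)_{|P|-1}`; in particular the corresponding coefficient of `[W̃_s]` is
`binom(n,2) · (n-1)_{s-1}`. -/
theorem WsP_coefficient_value (n s k : ℕ) (hn : 0 < n) (hs : 0 < s) (hsn : s ≤ n)
    (P : IdxPartition s k) :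
    (∀ i : Fin s, hasMD (WsPcone n P) (specialExp n s i)
      (Nat.choose n 2 * Nat.descFactorial (n - 1) (k - 1))) ∧
    (∀ i : Fin s, hasMD (WsPcone n (singletonPartition s)) (specialExp n s i)
      (Nat.choose n 2 * Nat.descFactorial (n - 1) (s - 1))) :=
  ⟨fun i => WsP_coefficient_value_general (.inr hsn) P i,
    fun i => WsP_coefficient_value_general (.inr hsn) (singletonPartition s) i⟩

end
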